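/- arXiv:1112.5415 — 3 statements merged into one kernel-verified Lean document; each statement's English description precedes it below -/
import Mathlib

section
/- Suppose Φ is infinite, and define E₂° = ⋃ L(α, ρ̂) ∩ Q̂, the union over all α ∈ Δ and ρ ∈ Φ⁺ with ρ̂ ≠ α, where L(α,ρ̂) is the affine line through α and ρ̂. Then E₂° is dense in E(Φ). -/
open Filter Topology

noncomputable section

variable {ι V : Type*} [Fintype ι] [NormedAddCommGroup V] [NormedSpace ℝ V]

/-- The set of simple `B`-reflections: the linear automorphisms of `V` given by the
`B`-reflection formula `u ↦ u - 2 (B α u / B α α) • α` associated to a simple root `α ∈ Δ`. -/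
def simpleReflections (B : LinearMap.BilinForm ℝ V) (Δ : Module.Basis ι ℝ V) :
    Set (V ≃ₗ[ℝ] V) :=
  { e | ∃ i : ι, ∀ u : V, e u = u - (2 * B (Δ i) u / B (Δ i) (Δ i)) • Δ i }

/-- The geometric Coxeter group `W`: the subgroup of linear automorphisms of `V`
generated by the simple `B`-reflections. -/
def cox (B : LinearMap.BilinForm ℝ V) (Δ : Module.Basis ι ℝ V) : Subgroup (V ≃ₗ[ℝ] V) :=
  Subgroup.closure (simpleReflections B Δ)

/-- The root system `Φ = W ⬝ Δ`. -/
def Phi (B : LinearMap.BilinForm ℝ V) (Δ : Module.Basis ι ℝ V) : Set V :=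
  { ρ | ∃ w ∈ cox B Δ, ∃ i : ι, w (Δ i) = ρ }

/-- The positive roots `Φ⁺ = Φ ∩ cone(Δ)`. -/
def posPhi (B : LinearMap.BilinForm ℝ V) (Δ : Module.Basis ι ℝ V) : Set V :=
  { ρ ∈ Phi B Δ | ∀ i : ι, 0 ≤ Δ.repr ρ i }

/-- `|v|₁`: the sum of the coordinates of `v` in the basis `Δ`. -/
def l1 (Δ : Module.Basis ι ℝ V) (v : V) : ℝ := ∑ i : ι, Δ.repr v i

/-- The normalization map `v ↦ v̂ = v / |v|₁`. -/
def nrm (Δ : Module.Basis ι ℝ V) (v : V) : V := (l1 Δ v)⁻¹ • v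

/-- The set `Φ̂` of normalized roots. -/
def nPhi (B : LinearMap.BilinForm ℝ V) (Δ : Module.Basis ι ℝ V) : Set V :=
  nrm Δ '' posPhi B Δ

/-- `E(Φ)`: the set of accumulation points of the set of normalized roots. -/
def Eset (B : LinearMap.BilinForm ℝ V) (Δ : Module.Basis ι ℝ V) : Set V :=
  { x | AccPt x (𝓟 (nPhi B Δ)) }

/-- The isotropic cone `Q` of `B`. -/
def isoQ (B : LinearMap.BilinForm ℝ V) : Set V := { v | B v v = 0 }

/-- The affine line through two points `a` and `b`. -/
def lineThrough (a b : V) : Set V := { y : V | ∃ t : ℝ, y = a + t • (b - a) }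

/-- `E₂`: the union over all pairs of distinct positive roots `ρ₁, ρ₂` of
`L(ρ̂₁, ρ̂₂) ∩ Q̂`. -/
def E2 (B : LinearMap.BilinForm ℝ V) (Δ : Module.Basis ι ℝ V) : Set V :=
  { x : V | ∃ ρ₁ ∈ posPhi B Δ, ∃ ρ₂ ∈ posPhi B Δ, ρ₁ ≠ ρ₂ ∧
      x ∈ lineThrough (nrm Δ ρ₁) (nrm Δ ρ₂) ∧ B x x = 0 ∧ l1 Δ x = 1 }

/-- `E₂°`: the union over all `α ∈ Δ` and `ρ ∈ Φ⁺` with `ρ̂ ≠ α` of `L(α, ρ̂) ∩ Q̂`. -/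
def E2circ (B : LinearMap.BilinForm ℝ V) (Δ : Module.Basis ι ℝ V) : Set V :=
  { x : V | ∃ i : ι, ∃ ρ ∈ posPhi B Δ, nrm Δ ρ ≠ Δ i ∧
      x ∈ lineThrough (Δ i) (nrm Δ ρ) ∧ B x x = 0 ∧ l1 Δ x = 1 }

set_option linter.unusedSectionVars false

section GroupLen

variable {G : Type*} [Group G] {κ : Type*}

def Rw (g : κ → G) (n : ℕ) (w : G) : Prop := ∃ l : List κ, l.length = n ∧ (l.map g).prod = w

def wlen (g : κ → G) (w : G) : ℕ := sInf {n | Rw g n w}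

lemma wlen_le {g : κ → G} {n : ℕ} {w : G} (h : Rw g n w) : wlen g w ≤ n := Nat.sInf_le h

lemma Rw_wlen {g : κ → G} {n : ℕ} {w : G} (h : Rw g n w) : Rw g (wlen g w) w :=
  Nat.sInf_mem (s := {n | Rw g n w}) ⟨n, h⟩

lemma Rw.mul {g : κ → G} {n m : ℕ} {w v : G} (h : Rw g n w) (h' : Rw g m v) :
    Rw g (n + m) (w * v) := by
  obtain ⟨l, rfl, rfl⟩ := h
  obtain ⟨l', rfl, rfl⟩ := h'
  exact ⟨l ++ l', by simp, by simp⟩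

lemma Rw_one (g : κ → G) : Rw g 0 1 := ⟨[], rfl, rfl⟩

lemma Rw_gen (g : κ → G) (i : κ) : Rw g 1 (g i) := ⟨[i], rfl, by simp⟩

lemma Rw_zero {g : κ → G} {w : G} (h : Rw g 0 w) : w = 1 := by
  obtain ⟨l, hl, rfl⟩ := h
  rw [List.length_eq_zero_iff] at hl
  simp [hl]

lemma Rw_succ {g : κ → G} {n : ℕ} {w : G} (h : Rw g (n + 1) w) :
    ∃ v t, Rw g n v ∧ w = v * g t := by
  obtain ⟨l, hl, rfl⟩ := h
  rcases List.eq_nil_or_concat l with rfl | ⟨l', t, rfl⟩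
  · simp at hl
  · refine ⟨(l'.map g).prod, t, ⟨l', by simpa using hl, rfl⟩, by simp⟩

def alt (g : κ → G) : κ → κ → ℕ → G
  | _, _, 0 => 1
  | s, t, m + 1 => alt g t s m * g t

def fl (s t : κ) : ℕ → κ
  | 0 => s
  | m + 1 => fl t s m

lemma fl_add_two (s t : κ) (m : ℕ) : fl s t (m + 2) = fl s t m := rfl

lemma fl_cases (s t : κ) (m : ℕ) :
    (fl s t m = s ∧ fl s t (m+1) = t) ∨ (fl s t m = t ∧ fl s t (m+1) = s) := by
  induction m generalizing s t with
  | zero => left; exact ⟨rfl, rfl⟩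
  | succ m ih =>
    rcases ih t s with h | h
    · right; exact h
    · left; exact h

lemma alt_succ' (g : κ → G) (s t : κ) (m : ℕ) :
    alt g s t (m + 1) = g (fl s t (m + 1)) * alt g s t m := by
  induction m generalizing s t with
  | zero => simp [alt, fl]
  | succ m ih =>
    rw [alt, ih t s]
    conv_rhs => rw [alt]
    rw [mul_assoc]; rfl

lemma Rw_alt (g : κ → G) (s t : κ) (m : ℕ) : Rw g m (alt g s t m) := by
  induction m generalizing s t with
  | zero => exact Rw_one g
  | succ m ih => exact (ih t s).mul (Rw_gen g t)

end GroupLen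

def Useq (c : ℝ) : ℕ → ℝ
  | 0 => 0
  | 1 => 1
  | m + 2 => c * Useq c (m + 1) - Useq c m

lemma Useq_sin (θ : ℝ) (m : ℕ) : Real.sin θ * Useq (2 * Real.cos θ) m = Real.sin (m * θ) := by
  induction m using Nat.twoStepInduction with
  | zero => simp [Useq]
  | one => simp [Useq]
  | more m h1 h2 =>
    have h3 : Real.sin (((m + 2 : ℕ) : ℝ) * θ) =
        2 * Real.cos θ * Real.sin (((m + 1 : ℕ) : ℝ) * θ) - Real.sin ((m : ℝ) * θ) := by
      have e1 : (((m + 2 : ℕ) : ℝ) * θ) = ((m + 1 : ℕ) : ℝ) * θ + θ := by push_cast; ring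
      have e2 : ((m : ℝ) * θ) = ((m + 1 : ℕ) : ℝ) * θ - θ := by push_cast; ring
      rw [e1, e2, Real.sin_add, Real.sin_sub]; ring
    rw [h3, Useq, ← h1, ← h2]; ring

lemma Useq_mono {c : ℝ} (hc : 2 ≤ c) (m : ℕ) : 0 ≤ Useq c m ∧ Useq c m ≤ Useq c (m + 1) := by
  induction m with
  | zero => simp [Useq]
  | succ m ih =>
    refine ⟨ih.1.trans ih.2, ?_⟩
    rw [Useq]
    nlinarith [ih.1, ih.2, mul_le_mul_of_nonneg_right hc (ih.1.trans ih.2)]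

structure Hyp (B : LinearMap.BilinForm ℝ V) (Δ : Module.Basis ι ℝ V) : Prop where
  symm : ∀ u v : V, B u v = B v u
  diag : ∀ i : ι, B (Δ i) (Δ i) = 1
  off : ∀ i j : ι, i ≠ j → B (Δ i) (Δ j) ≤ -1 ∨
      ∃ k : ℕ, 2 ≤ k ∧ B (Δ i) (Δ j) = -Real.cos (Real.pi / (k : ℝ))

def rf (B : LinearMap.BilinForm ℝ V) (v : V) : V →ₗ[ℝ] V :=
  LinearMap.id - (2 • B v).smulRight v

lemma rf_apply (B : LinearMap.BilinForm ℝ V) (v u : V) : rf B v u = u - (2 * B v u) • v := by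
  simp [rf, two_smul, two_mul]

lemma rf_invol {B : LinearMap.BilinForm ℝ V} {v : V} (h : B v v = 1) :
    Function.Involutive (rf B v) := by
  intro u
  simp only [rf_apply, map_sub, map_smul, h]
  module

def re {B : LinearMap.BilinForm ℝ V} {v : V} (h : B v v = 1) : V ≃ₗ[ℝ] V :=
  LinearEquiv.ofInvolutive (rf B v) (rf_invol h)

lemma re_apply {B : LinearMap.BilinForm ℝ V} {v : V} (h : B v v = 1) (u : V) :
    re h u = u - (2 * B v u) • v := by
  rw [← rf_apply]; rfl

lemma re_mul_self {B : LinearMap.BilinForm ℝ V} {v : V} (h : B v v = 1) :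
    re h * re h = 1 := by
  ext u
  exact rf_invol h u

variable {B : LinearMap.BilinForm ℝ V} {Δ : Module.Basis ι ℝ V}

def sg (H : Hyp B Δ) (i : ι) : V ≃ₗ[ℝ] V := re (H.diag i)

lemma sg_apply (H : Hyp B Δ) (i : ι) (u : V) :
    sg H i u = u - (2 * B (Δ i) u) • Δ i := re_apply _ u

lemma sg_sq (H : Hyp B Δ) (i : ι) : sg H i * sg H i = 1 := re_mul_self _

lemma sg_self (H : Hyp B Δ) (i : ι) : sg H i (Δ i) = - Δ i := by
  rw [sg_apply, H.diag]; module

lemma Hyp.nonpos (H : Hyp B Δ) {i j : ι} (h : i ≠ j) : B (Δ i) (Δ j) ≤ 0 := by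
  rcases H.off i j h with h | ⟨k, hk, h⟩
  · linarith
  · rw [h, neg_nonpos]
    have hk' : (2:ℝ) ≤ k := by exact_mod_cast hk
    apply Real.cos_nonneg_of_neg_pi_div_two_le_of_le
    · have := Real.pi_pos
      have : 0 ≤ Real.pi / k := by positivity
      linarith
    · exact div_le_div_of_nonneg_left Real.pi_pos.le (by norm_num) hk'

lemma sg_other (H : Hyp B Δ) {s t : ι} {c : ℝ} (hc : c = -2 * B (Δ s) (Δ t)) :
    sg H s (Δ t) = Δ t + c • Δ s := by
  rw [sg_apply, hc]; module

lemma alt_apply (H : Hyp B Δ) {s t : ι} {c : ℝ} (hc : c = -2 * B (Δ s) (Δ t)) (m : ℕ) :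
    alt (sg H) s t m (Δ s) = Useq c (m+1) • Δ (fl s t m) + Useq c m • Δ (fl s t (m+1)) := by
  induction m with
  | zero => simp [alt, Useq, fl]
  | succ m ih =>
    have h2 : B (Δ t) (Δ s) = B (Δ s) (Δ t) := H.symm _ _
    rw [alt_succ', LinearEquiv.mul_apply, ih, map_add, map_smul, map_smul, sg_self]
    have : sg H (fl s t (m+1)) (Δ (fl s t m)) = Δ (fl s t m) + c • Δ (fl s t (m+1)) := by
      apply sg_other
      rcases fl_cases s t m with h | h <;> rw [h.1, h.2, hc]
      rw [h2]
    rw [this, fl_add_two, Useq]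
    module

lemma alt_apply_last (H : Hyp B Δ) {s t : ι} {c : ℝ} (hc : c = -2 * B (Δ s) (Δ t)) (m : ℕ) :
    alt (sg H) s t (m+1) (Δ t) =
      -(Useq c (m+1) • Δ (fl s t (m+1)) + Useq c m • Δ (fl s t m)) := by
  rw [alt, LinearEquiv.mul_apply, sg_self, map_neg, alt_apply H (c := c)]
  · rfl
  · rw [hc, H.symm]

lemma alt_perp (H : Hyp B Δ) {s t : ι} {u : V} (h1 : B (Δ s) u = 0) (h2 : B (Δ t) u = 0) (m : ℕ) :
    alt (sg H) s t m u = u := by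
  induction m generalizing s t with
  | zero => rfl
  | succ m ih =>
    rw [alt, LinearEquiv.mul_apply, sg_apply, h2]
    simpa using ih h2 h1

lemma cos_facts {k : ℕ} (hk : 2 ≤ k) : 0 < Real.sin (Real.pi / k) ∧
    ∀ m ≤ k, 0 ≤ Useq (2 * Real.cos (Real.pi / k)) m := by
  have hk' : (2:ℝ) ≤ k := by exact_mod_cast hk
  have hs : 0 < Real.sin (Real.pi / k) := by
    apply Real.sin_pos_of_pos_of_lt_pi
    · have := Real.pi_pos; positivity
    · rw [div_lt_iff₀ (by linarith)]; nlinarith [Real.pi_pos]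
  refine ⟨hs, fun m hm => ?_⟩
  have h := Useq_sin (Real.pi / k) m
  have : 0 ≤ Real.sin (m * (Real.pi / k)) := by
    apply Real.sin_nonneg_of_nonneg_of_le_pi
    · have := Real.pi_pos; positivity
    · have : (m:ℝ) ≤ k := by exact_mod_cast hm
      rw [← mul_div_assoc, div_le_iff₀ (by linarith)]; nlinarith [Real.pi_pos]
  rw [← h] at this
  exact nonneg_of_mul_nonneg_right this hs

lemma braid (H : Hyp B Δ) {s t : ι} {k : ℕ} (hk : 2 ≤ k)
    (hB : B (Δ s) (Δ t) = -Real.cos (Real.pi / (k : ℝ))) :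
    alt (sg H) s t k = alt (sg H) t s k := by
  have hk' : (2:ℝ) ≤ k := by exact_mod_cast hk
  obtain ⟨hs, -⟩ := cos_facts hk
  set θ := Real.pi / (k:ℝ) with hθ
  have hkθ : (k:ℝ) * θ = Real.pi := by rw [hθ]; field_simp
  obtain ⟨c, hc⟩ : ∃ c, c = 2 * Real.cos θ := ⟨_, rfl⟩
  have hU : ∀ m, Real.sin θ * Useq c m = Real.sin (m * θ) := by
    intro m; rw [hc]; exact Useq_sin θ m
  have hc1 : c = -2 * B (Δ s) (Δ t) := by rw [hB, hc]; ring
  have hc2 : c = -2 * B (Δ t) (Δ s) := by rw [H.symm, hB, hc]; ring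
  obtain ⟨m, rfl⟩ : ∃ m, k = m + 1 := ⟨k - 1, by omega⟩
  have U0 : Useq c (m+1) = 0 := by
    have := hU (m+1)
    rw [hkθ, Real.sin_pi] at this
    exact (mul_eq_zero.1 this).resolve_left hs.ne'
  have Um : Useq c m = 1 := by
    have := hU m
    have e : (m:ℝ) * θ = Real.pi - θ := by rw [← hkθ]; push_cast; ring
    rw [e, Real.sin_pi_sub] at this
    exact mul_left_cancel₀ hs.ne' (by rw [this, mul_one])
  have Up : Useq c (m+2) = -1 := by rw [Useq, U0, Um]; ring
  have key : ∀ a b : ι, c = -2 * B (Δ a) (Δ b) → 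
      alt (sg H) a b (m+1) (Δ a) = alt (sg H) b a (m+1) (Δ a) := by
    intro a b hab
    rw [alt_apply H hab, alt_apply_last H (c := c) (by rw [hab, H.symm]), U0, Um, Up]
    have : fl b a m = fl a b (m+1) := rfl
    rw [this]; module
  have det : 1 - B (Δ s) (Δ t) ^ 2 = Real.sin θ ^ 2 := by
    rw [hB]; nlinarith [Real.sin_sq_add_cos_sq θ]
  have det0 : 1 - B (Δ s) (Δ t) ^ 2 ≠ 0 := by rw [det]; positivity
  ext u
  obtain ⟨b, hb⟩ : ∃ b, b = B (Δ s) (Δ t) := ⟨_, rfl⟩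
  have hbt : B (Δ t) (Δ s) = b := by rw [hb, H.symm]
  rw [← hb] at det0
  obtain ⟨p, hp⟩ : ∃ p, p = (B (Δ s) u - b * B (Δ t) u) / (1 - b^2) := ⟨_, rfl⟩
  obtain ⟨q, hq⟩ : ∃ q, q = (B (Δ t) u - b * B (Δ s) u) / (1 - b^2) := ⟨_, rfl⟩
  have hu : u = (u - p • Δ s - q • Δ t) + p • Δ s + q • Δ t := by module
  have o1 : B (Δ s) (u - p • Δ s - q • Δ t) = 0 := by
    simp only [map_sub, map_smul, smul_eq_mul, H.diag, ← hb, hp, hq]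
    field_simp; ring
  have o2 : B (Δ t) (u - p • Δ s - q • Δ t) = 0 := by
    simp only [map_sub, map_smul, smul_eq_mul, H.diag, hbt, hp, hq]
    field_simp; ring
  rw [hu, map_add, map_add, map_add, map_add, alt_perp H o1 o2, alt_perp H o2 o1]
  simp only [map_smul]
  rw [key s t hc1, key t s hc2]

theorem pos_main (H : Hyp B Δ) : ∀ n : ℕ, ∀ w, Rw (sg H) n w → wlen (sg H) w = n → ∀ s,
    wlen (sg H) w ≤ wlen (sg H) (w * sg H s) → ∀ j, 0 ≤ Δ.repr (w (Δ s)) j := by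
  classical
  intro n
  induction n using Nat.strong_induction_on with
  | _ n IH =>
  intro w hw hn s hs
  rcases Nat.eq_zero_or_pos n with rfl | hpos
  · intro j
    rw [Rw_zero hw]
    simp only [LinearEquiv.coe_one, id, Module.Basis.repr_self, Finsupp.single_apply]
    split_ifs <;> norm_num
  obtain ⟨n', rfl⟩ : ∃ n', n = n' + 1 := ⟨n - 1, by omega⟩
  obtain ⟨w', t, hw', hwt⟩ := Rw_succ hw
  have hst : s ≠ t := by
    rintro rfl
    have : w * sg H s = w' := by rw [hwt, mul_assoc, sg_sq, mul_one]
    rw [this, hn] at hs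
    have := wlen_le hw'
    omega
  let D : ℕ → Prop := fun m => m ≤ n' + 1 ∧ ∃ v, Rw (sg H) (n' + 1 - m) v ∧ w = v * alt (sg H) s t m
  have hD0 : D 0 := ⟨by omega, w, hw, by simp [alt]⟩
  have hD1 : D 1 := ⟨by omega, w', hw', by simpa [alt] using hwt⟩
  have hDex : ∃ m, ¬ D m := ⟨n' + 2, fun h => by have := h.1; omega⟩
  obtain ⟨m, hm⟩ : ∃ m, Nat.find hDex = m + 2 := by
    have h0 : Nat.find hDex ≠ 0 := fun h => (h ▸ Nat.find_spec hDex) hD0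
    have h1 : Nat.find hDex ≠ 1 := fun h => (h ▸ Nat.find_spec hDex) hD1
    exact ⟨Nat.find hDex - 2, by omega⟩
  have hDm2 : ¬ D (m + 2) := hm ▸ Nat.find_spec hDex
  have hDm : D (m + 1) := by
    by_contra h
    have := Nat.find_min' hDex h
    omega
  obtain ⟨hmn, v, hv, hwv⟩ := hDm
  have hlen : ∀ a b x y, Rw (sg H) a x → Rw (sg H) b y → w = x * y → n' + 1 ≤ a + b := by
    intro a b x y hx hy h
    rw [← hn, h]; exact wlen_le (hx.mul hy)
  have hvl : wlen (sg H) v = n' + 1 - (m + 1) := by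
    have h1 := wlen_le hv
    have h2 := hlen _ _ _ _ (Rw_wlen hv) (Rw_alt (sg H) s t (m+1)) hwv
    omega
  have hr : wlen (sg H) v ≤ wlen (sg H) (v * sg H (fl s t (m+2))) := by
    by_contra hlt
    push Not at hlt
    have hR := Rw_wlen (hv.mul (Rw_gen (sg H) (fl s t (m+2))))
    have hw2 : w = (v * sg H (fl s t (m+2))) * alt (sg H) s t (m+2) := by
      rw [alt_succ', hwv, mul_assoc, ← mul_assoc (sg H _) (sg H _), sg_sq, one_mul]
    have h2 := hlen _ _ _ _ hR (Rw_alt (sg H) s t (m+2)) hw2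
    apply hDm2
    refine ⟨by omega, _, ?_, hw2⟩
    have : n' + 1 - (m + 2) = wlen (sg H) (v * sg H (fl s t (m+2))) := by omega
    rw [this]; exact hR
  have hr' : wlen (sg H) v ≤ wlen (sg H) (v * sg H (fl s t (m+1))) := by
    by_contra hlt
    push Not at hlt
    have hR := Rw_wlen (hv.mul (Rw_gen (sg H) (fl s t (m+1))))
    have hw2 : w = (v * sg H (fl s t (m+1))) * alt (sg H) s t m := by
      rw [hwv, alt_succ', mul_assoc]
    have h2 := hlen _ _ _ _ hR (Rw_alt (sg H) s t m) hw2
    omega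
  have p1 := IH _ (by omega) v hv hvl _ hr
  have p2 := IH _ (by omega) v hv hvl _ hr'
  have hU : 0 ≤ Useq (-2 * B (Δ s) (Δ t)) (m+1) ∧ 0 ≤ Useq (-2 * B (Δ s) (Δ t)) (m+2) := by
    rcases H.off s t hst with h | ⟨k, hk, h⟩
    · have hc : 2 ≤ -2 * B (Δ s) (Δ t) := by linarith
      exact ⟨(Useq_mono hc _).1, (Useq_mono hc _).1⟩
    · have hDk : ¬ D k := by
        rintro ⟨hkn, v', hv', hw'⟩
        rw [braid H hk h] at hw'
        obtain ⟨k', rfl⟩ : ∃ k', k = k' + 1 := ⟨k - 1, by omega⟩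
        rw [alt] at hw'
        have h1 : w * sg H s = v' * alt (sg H) s t k' := by
          rw [hw', mul_assoc, mul_assoc, sg_sq, mul_one]
        rw [h1, hn] at hs
        have := wlen_le (hv'.mul (Rw_alt (sg H) s t k'))
        omega
      have hmk : m + 2 ≤ k := by
        rw [← hm]; exact Nat.find_min' hDex hDk
      have hc : -2 * B (Δ s) (Δ t) = 2 * Real.cos (Real.pi / k) := by rw [h]; ring
      rw [hc]
      exact ⟨(cos_facts hk).2 _ (by omega), (cos_facts hk).2 _ (by omega)⟩
  intro j
  rw [hwv, LinearEquiv.mul_apply, alt_apply H rfl]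
  simp only [map_add, map_smul, Finsupp.add_apply, Finsupp.smul_apply, smul_eq_mul]
  exact add_nonneg (mul_nonneg hU.2 (p2 j)) (mul_nonneg hU.1 (p1 j))

lemma mem_simple (H : Hyp B Δ) (e : V ≃ₗ[ℝ] V) :
    e ∈ simpleReflections B Δ ↔ ∃ i, e = sg H i := by
  constructor
  · rintro ⟨i, hi⟩
    refine ⟨i, ?_⟩
    ext u
    rw [hi, sg_apply, H.diag, div_one]
  · rintro ⟨i, rfl⟩
    refine ⟨i, fun u => ?_⟩
    rw [sg_apply, H.diag, div_one]

lemma sg_mem (H : Hyp B Δ) (i : ι) : sg H i ∈ cox B Δ :=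
  Subgroup.subset_closure ((mem_simple H _).2 ⟨i, rfl⟩)

lemma sg_inv (H : Hyp B Δ) (i : ι) : (sg H i)⁻¹ = sg H i :=
  inv_eq_of_mul_eq_one_left (sg_sq H i)

lemma Rw_inv (H : Hyp B Δ) {n : ℕ} {w : V ≃ₗ[ℝ] V} (h : Rw (sg H) n w) : Rw (sg H) n w⁻¹ := by
  induction n generalizing w with
  | zero => rw [Rw_zero h, inv_one]; exact Rw_one _
  | succ n ih =>
    obtain ⟨v, t, hv, rfl⟩ := Rw_succ h
    rw [mul_inv_rev, sg_inv, add_comm]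
    exact (Rw_gen _ t).mul (ih hv)

lemma cox_Rw (H : Hyp B Δ) {w : V ≃ₗ[ℝ] V} (hw : w ∈ cox B Δ) : ∃ n, Rw (sg H) n w := by
  induction hw using Subgroup.closure_induction with
  | mem x hx =>
    obtain ⟨i, rfl⟩ := (mem_simple H _).1 hx
    exact ⟨1, Rw_gen _ i⟩
  | one => exact ⟨0, Rw_one _⟩
  | mul x y _ _ hx hy =>
    obtain ⟨n, hn⟩ := hx
    obtain ⟨m, hm⟩ := hy
    exact ⟨_, hn.mul hm⟩
  | inv x _ hx =>
    obtain ⟨n, hn⟩ := hx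
    exact ⟨n, Rw_inv H hn⟩

/-- induction principle for the group, by left multiplication -/
lemma cox_ind (H : Hyp B Δ) {P : (V ≃ₗ[ℝ] V) → Prop} (h1 : P 1)
    (hs : ∀ i w, w ∈ cox B Δ → P w → P (w * sg H i)) {w : V ≃ₗ[ℝ] V} (hw : w ∈ cox B Δ) : P w := by
  obtain ⟨n, hn⟩ := cox_Rw H hw
  have : w ∈ cox B Δ ∧ P w := by
    clear hw
    induction n generalizing w with
    | zero => rw [Rw_zero hn]; exact ⟨one_mem _, h1⟩
    | succ n ih =>
      obtain ⟨v, t, hv, rfl⟩ := Rw_succ hn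
      exact ⟨mul_mem (ih hv).1 (sg_mem H t), hs _ _ (ih hv).1 (ih hv).2⟩
  exact this.2

lemma re_inv (hsymm : ∀ u v : V, B u v = B v u) {v : V} (h : B v v = 1) (x y : V) :
    B (re h x) (re h y) = B x y := by
  simp only [re_apply, map_sub, map_smul, LinearMap.sub_apply, LinearMap.smul_apply, smul_eq_mul, h]
  rw [hsymm x v]; ring

lemma cox_B (H : Hyp B Δ) {w : V ≃ₗ[ℝ] V} (hw : w ∈ cox B Δ) (x y : V) :
    B (w x) (w y) = B x y := by
  revert x y
  refine cox_ind H (P := fun w => ∀ x y, B (w x) (w y) = B x y) (fun _ _ => rfl) ?_ hw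
  intro i w _ ih x y
  rw [LinearEquiv.mul_apply, LinearEquiv.mul_apply, ih]
  exact re_inv H.symm (H.diag i) x y

lemma Phi_simple (i : ι) : Δ i ∈ Phi B Δ := ⟨1, one_mem _, i, rfl⟩

lemma Phi_cox {w : V ≃ₗ[ℝ] V} (hw : w ∈ cox B Δ) {ρ : V} (h : ρ ∈ Phi B Δ) : w ρ ∈ Phi B Δ := by
  obtain ⟨v, hv, i, rfl⟩ := h
  exact ⟨w * v, mul_mem hw hv, i, rfl⟩

lemma Phi_norm (H : Hyp B Δ) {ρ : V} (h : ρ ∈ Phi B Δ) : B ρ ρ = 1 := by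
  obtain ⟨v, hv, i, rfl⟩ := h
  rw [cox_B H hv, H.diag]

lemma Phi_neg (H : Hyp B Δ) {ρ : V} (h : ρ ∈ Phi B Δ) : -ρ ∈ Phi B Δ := by
  obtain ⟨v, hv, i, rfl⟩ := h
  refine ⟨v * sg H i, mul_mem hv (sg_mem H i), i, ?_⟩
  rw [LinearEquiv.mul_apply, sg_self, map_neg]

lemma Phi_ne_zero (H : Hyp B Δ) {ρ : V} (h : ρ ∈ Phi B Δ) : ρ ≠ 0 := by
  rintro rfl
  simpa using Phi_norm H h

lemma re_mem (H : Hyp B Δ) {ρ : V} (h : ρ ∈ Phi B Δ) (h1 : B ρ ρ = 1) : re h1 ∈ cox B Δ := by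
  obtain ⟨v, hv, i, rfl⟩ := h
  have : re h1 = v * sg H i * v⁻¹ := by
    ext u
    rw [re_apply, LinearEquiv.mul_apply, LinearEquiv.mul_apply, sg_apply, map_sub, map_smul]
    have e : v (v⁻¹ u) = u := by rw [← LinearEquiv.mul_apply, mul_inv_cancel]; rfl
    rw [e]
    congr 3
    conv_lhs => rw [← e]
    rw [cox_B H hv]
  rw [this]
  exact mul_mem (mul_mem hv (sg_mem H i)) (inv_mem hv)

lemma pos_or_neg (H : Hyp B Δ) {ρ : V} (h : ρ ∈ Phi B Δ) :
    ρ ∈ posPhi B Δ ∨ -ρ ∈ posPhi B Δ := by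
  obtain ⟨w, hw, s, rfl⟩ := h
  have hΦ : w (Δ s) ∈ Phi B Δ := ⟨w, hw, s, rfl⟩
  obtain ⟨n, hn⟩ := cox_Rw H hw
  rcases le_total (wlen (sg H) w) (wlen (sg H) (w * sg H s)) with hl | hl
  · left
    exact ⟨hΦ, pos_main H _ w (Rw_wlen hn) rfl s hl⟩
  · right
    refine ⟨Phi_neg H hΦ, ?_⟩
    have h2 := hn.mul (Rw_gen (sg H) s)
    have := pos_main H _ (w * sg H s) (Rw_wlen h2) rfl s (by
      rw [mul_assoc, sg_sq, mul_one]; exact hl)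
    rwa [LinearEquiv.mul_apply, sg_self, map_neg] at this

lemma not_both (H : Hyp B Δ) {ρ : V} (h : ρ ∈ posPhi B Δ) (h' : -ρ ∈ posPhi B Δ) : False := by
  apply Phi_ne_zero H h.1
  apply Δ.repr.injective
  ext i
  have h1 := h.2 i
  have h2 := h'.2 i
  simp only [map_neg, Finsupp.neg_apply] at h2
  simp only [map_zero, Finsupp.zero_apply]
  linarith

lemma eq_one_of_pos (H : Hyp B Δ) {w : V ≃ₗ[ℝ] V} (hw : w ∈ cox B Δ)
    (h : ∀ i, w (Δ i) ∈ posPhi B Δ) : w = 1 := by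
  obtain ⟨n, hn⟩ := cox_Rw H hw
  have hl := Rw_wlen hn
  obtain ⟨m, hm⟩ : ∃ m, m = wlen (sg H) w := ⟨_, rfl⟩
  rw [← hm] at hl
  rcases m with _ | m
  · exact Rw_zero hl
  · exfalso
    obtain ⟨v, t, hv, rfl⟩ := Rw_succ hl
    have h1 := wlen_le hv
    have h2 := pos_main H _ v (Rw_wlen hv) rfl t (by omega)
    have h3 := h t
    refine not_both H h3 ⟨Phi_neg H h3.1, ?_⟩
    rw [LinearEquiv.mul_apply, sg_self, map_neg v, neg_neg]
    exact h2

def l1L (Δ : Module.Basis ι ℝ V) : V →ₗ[ℝ] ℝ := ∑ i, Δ.coord i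

lemma l1L_apply (v : V) : l1L Δ v = l1 Δ v := by
  simp [l1L, l1]

lemma l1_simple (i : ι) : l1 Δ (Δ i) = 1 := by
  classical
  simp [l1, Finsupp.single_apply]

lemma l1_pos (H : Hyp B Δ) {ρ : V} (h : ρ ∈ posPhi B Δ) : 0 < l1 Δ ρ := by
  have h0 : 0 ≤ l1 Δ ρ := Finset.sum_nonneg fun i _ => h.2 i
  refine lt_of_le_of_ne h0 fun he => Phi_ne_zero H h.1 ?_
  have := (Finset.sum_eq_zero_iff_of_nonneg (fun i _ => h.2 i)).1 he.symm
  apply Δ.repr.injective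
  ext i
  simpa using this i (Finset.mem_univ i)

lemma pos_of_l1 (H : Hyp B Δ) {ρ : V} (h : ρ ∈ Phi B Δ) (hl : 0 < l1 Δ ρ) : ρ ∈ posPhi B Δ := by
  rcases pos_or_neg H h with h | h
  · exact h
  · have := l1_pos H h
    rw [← l1L_apply, map_neg, l1L_apply] at this
    linarith

lemma eq_of_smul (H : Hyp B Δ) {ρ σ : V} (h : ρ ∈ posPhi B Δ) (h' : σ ∈ posPhi B Δ) {c : ℝ}
    (hc : ρ = c • σ) : ρ = σ := by
  have h1 := Phi_norm H h.1
  have h2 := Phi_norm H h'.1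
  rw [hc] at h1
  simp only [map_smul, LinearMap.smul_apply, smul_eq_mul, h2] at h1
  have h3 := l1_pos H h
  have h4 := l1_pos H h'
  rw [hc, ← l1L_apply, map_smul, l1L_apply, smul_eq_mul] at h3
  have : 0 < c := by
    by_contra hcn
    push Not at hcn
    nlinarith
  have : c = 1 := by nlinarith
  rw [hc, this, one_smul]

lemma simple_pos (H : Hyp B Δ) (i : ι) : Δ i ∈ posPhi B Δ :=
  pos_of_l1 H (Phi_simple i) (by rw [l1_simple]; norm_num)

lemma sg_perm (H : Hyp B Δ) {ρ : V} (h : ρ ∈ posPhi B Δ) {i : ι} (hi : ρ ≠ Δ i) :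
    sg H i ρ ∈ posPhi B Δ := by
  classical
  rcases pos_or_neg H (Phi_cox (sg_mem H i) h.1) with h' | h'
  · exact h'
  · exfalso
    apply hi
    apply eq_of_smul H h (simple_pos H i) (c := Δ.repr ρ i)
    apply Δ.repr.injective
    ext j
    by_cases hj : i = j
    · subst hj; simp
    · have h1 := h'.2 j
      have h2 := h.2 j
      simp only [sg_apply, map_neg, map_sub, map_smul, Module.Basis.repr_self, Finsupp.neg_apply,
        Finsupp.sub_apply, Finsupp.smul_apply, Finsupp.single_apply, hj, if_false, smul_zero,
        sub_zero] at h1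
      simp only [map_smul, Module.Basis.repr_self, Finsupp.smul_apply, Finsupp.single_apply, hj,
        if_false, smul_zero]
      linarith

lemma fd (Δ : Module.Basis ι ℝ V) : FiniteDimensional ℝ V := Module.Finite.of_basis Δ

lemma cont_lin (Δ : Module.Basis ι ℝ V) (f : V →ₗ[ℝ] ℝ) : Continuous f := by
  have := fd Δ
  exact f.continuous_of_finiteDimensional

lemma cont_B (B : LinearMap.BilinForm ℝ V) (Δ : Module.Basis ι ℝ V) :
    Continuous (fun p : V × V => B p.1 p.2) := by
  have : (fun p : V × V => B p.1 p.2) = fun p => ∑ i, Δ.coord i p.1 * B (Δ i) p.2 := by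
    ext p
    conv_lhs => rw [← Δ.sum_repr p.1, map_sum, LinearMap.sum_apply]
    simp only [map_smul, LinearMap.smul_apply, smul_eq_mul, Module.Basis.coord_apply]
  rw [this]
  refine continuous_finsetSum _ fun i _ => ?_
  exact ((cont_lin Δ (Δ.coord i)).comp continuous_fst).mul
    ((cont_lin Δ (B (Δ i))).comp continuous_snd)

lemma cont_B' {X : Type*} [TopologicalSpace X] (B : LinearMap.BilinForm ℝ V)
    (Δ : Module.Basis ι ℝ V) {f g : X → V} (hf : Continuous f) (hg : Continuous g) :
    Continuous (fun x => B (f x) (g x)) :=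
  (cont_B B Δ).comp (hf.prodMk hg)

theorem discrete (H : Hyp B Δ) (C : ℝ) : {ρ | ρ ∈ posPhi B Δ ∧ l1 Δ ρ ≤ C}.Finite := by
  have := fd Δ
  have : ProperSpace V := FiniteDimensional.proper ℝ V
  by_contra hS
  set S := {ρ | ρ ∈ posPhi B Δ ∧ l1 Δ ρ ≤ C} with hSd
  have hSinf : S.Infinite := hS
  -- S is contained in a compact set
  let e : V ≃L[ℝ] (ι → ℝ) := Δ.equivFun.toContinuousLinearEquiv
  have hK : IsCompact (e ⁻¹' (Set.Icc (fun _ => 0) (fun _ => C))) := 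
    e.toHomeomorph.isCompact_preimage.2 isCompact_Icc
  have hSK : S ⊆ e ⁻¹' (Set.Icc (fun _ => 0) (fun _ => C)) := by
    rintro ρ ⟨h1, h2⟩
    refine ⟨fun i => h1.2 i, fun i => ?_⟩
    refine le_trans ?_ h2
    exact Finset.single_le_sum (f := fun i => Δ.repr ρ i) (fun i _ => h1.2 i) (Finset.mem_univ i)
  obtain ⟨p, -, hp⟩ := hSinf.exists_accPt_of_subset_isCompact hK hSK
  have hpp : B p p = 1 := by
    have hcl : IsClosed {v : V | B v v = 1} :=
      isClosed_eq (cont_B' B Δ continuous_id continuous_id) continuous_const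
    have : p ∈ closure S := hp.clusterPt.mem_closure
    exact closure_minimal (fun ρ hρ => Phi_norm H hρ.1.1) hcl this
  have hF : ∀ i, ∀ᶠ q : V × V in 𝓝 (p, p), 0 < l1L Δ (rf B q.1 (rf B q.2 (Δ i))) := by
    intro i
    have hc : Continuous (fun q : V × V => l1L Δ (rf B q.1 (rf B q.2 (Δ i)))) := by
      have c1 : Continuous (fun q : V × V => rf B q.2 (Δ i)) := by
        simp only [rf_apply]
        exact continuous_const.sub ((continuous_const.mul
          (cont_B' B Δ continuous_snd continuous_const)).smul continuous_snd)
      have c2 : Continuous (fun q : V × V => rf B q.1 (rf B q.2 (Δ i))) := by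
        have : (fun q : V × V => rf B q.1 (rf B q.2 (Δ i))) = fun q : V × V =>
          (rf B q.2 (Δ i)) - (2 * B q.1 (rf B q.2 (Δ i))) • q.1 := by
          ext q; rw [rf_apply]
        rw [this]
        exact c1.sub ((continuous_const.mul (cont_B' B Δ continuous_fst c1)).smul continuous_fst)
      exact (cont_lin Δ (l1L Δ)).comp c2
    apply hc.continuousAt.eventually_const_lt
    show 0 < l1L Δ (rf B p (rf B p (Δ i)))
    rw [rf_invol hpp, l1L_apply, l1_simple]
    norm_num
  have hF' := eventually_all.2 hF
  rw [nhds_prod_eq] at hF'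
  obtain ⟨U, hU, hUU⟩ := (eventually_prod_self_iff (r := fun a b => ∀ i,
    0 < l1L Δ (rf B a (rf B b (Δ i))))).1 hF'
  have hinf : (U ∩ S).Infinite := Set.Infinite.of_accPt (hp.nhds_inter hU)
  obtain ⟨ρ, hρ, σ, hσ, hne⟩ := hinf.nontrivial
  have h1 := Phi_norm H hρ.2.1.1
  have h2 := Phi_norm H hσ.2.1.1
  have hw : re h1 * re h2 ∈ cox B Δ := mul_mem (re_mem H hρ.2.1.1 h1) (re_mem H hσ.2.1.1 h2)
  have hw1 : re h1 * re h2 = 1 := by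
    apply eq_one_of_pos H hw
    intro i
    apply pos_of_l1 H (Phi_cox hw (Phi_simple i))
    rw [← l1L_apply]
    exact hUU ρ hρ.1 σ hσ.1 i
  apply hne
  have h3 : re h1 (re h2 σ) = σ := by rw [← LinearEquiv.mul_apply, hw1]; rfl
  rw [re_apply h2, h2] at h3
  have h4 : σ - (2 * 1 : ℝ) • σ = -σ := by module
  rw [h4, map_neg, re_apply] at h3
  refine (eq_of_smul H hσ.2.1 hρ.2.1 (c := B ρ σ) ?_).symm
  have h5 : (2:ℝ) • σ = (2:ℝ) • (B ρ σ • ρ) := by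
    calc (2:ℝ) • σ = σ + σ := two_smul _ _
      _ = σ + -(σ - (2 * B ρ σ) • ρ) := by rw [h3]
      _ = _ := by module
  exact smul_right_injective V (two_ne_zero (α := ℝ)) h5

lemma B_left (u v : V) : B u v = ∑ i, Δ.repr u i * B (Δ i) v := by
  conv_lhs => rw [← Δ.sum_repr u, map_sum, LinearMap.sum_apply]
  simp only [map_smul, LinearMap.smul_apply, smul_eq_mul]

lemma B_right (u v : V) : B u v = ∑ j, Δ.repr v j * B u (Δ j) := by
  conv_lhs => rw [← Δ.sum_repr v, map_sum]
  simp only [map_smul, smul_eq_mul]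

structure Rad (B : LinearMap.BilinForm ℝ V) (Δ : Module.Basis ι ℝ V) (x : V) : Prop where
  nn : ∀ i, 0 ≤ Δ.repr x i
  rad : ∀ i, B (Δ i) x = 0

def InI (Δ : Module.Basis ι ℝ V) (x v : V) : Prop := ∀ i, Δ.repr x i = 0 → Δ.repr v i = 0

def OutI (Δ : Module.Basis ι ℝ V) (x v : V) : Prop := ∀ i, Δ.repr x i ≠ 0 → Δ.repr v i = 0

lemma psd (H : Hyp B Δ) {x : V} (hx : Rad B Δ x) {v : V} (hv : InI Δ x v) : 0 ≤ B v v := by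
  obtain ⟨X, hX⟩ : ∃ X : ι → ℝ, X = fun i => Δ.repr x i := ⟨_, rfl⟩
  obtain ⟨y, hy⟩ : ∃ y : ι → ℝ, y = fun i => Δ.repr v i / Δ.repr x i := ⟨_, rfl⟩
  have hvy : ∀ i, Δ.repr v i = X i * y i := by
    intro i
    rw [hX, hy]
    by_cases h : Δ.repr x i = 0
    · simp [h, hv i h]
    · field_simp
  have e1 : B v v = ∑ i, ∑ j, (X i * y i) * (X j * y j) * B (Δ i) (Δ j) := by
    rw [B_left (Δ := Δ)]
    refine Finset.sum_congr rfl fun i _ => ?_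
    rw [B_right (Δ := Δ), Finset.mul_sum]
    refine Finset.sum_congr rfl fun j _ => ?_
    rw [hvy, hvy]; ring
  have e2 : ∑ i, ∑ j, X i * X j * B (Δ i) (Δ j) * (y i)^2 = 0 := by
    refine Finset.sum_eq_zero fun i _ => ?_
    have := hx.rad i
    rw [B_right (Δ := Δ)] at this
    calc ∑ j, X i * X j * B (Δ i) (Δ j) * (y i)^2
        = X i * (y i)^2 * ∑ j, Δ.repr x j * B (Δ i) (Δ j) := by
          rw [Finset.mul_sum, hX]
          exact Finset.sum_congr rfl fun j _ => by ring
      _ = 0 := by rw [this, mul_zero]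
  have e3 : ∑ i, ∑ j, X i * X j * B (Δ i) (Δ j) * (y j)^2 = 0 := by
    rw [Finset.sum_comm, ← e2]
    refine Finset.sum_congr rfl fun i _ => Finset.sum_congr rfl fun j _ => ?_
    rw [H.symm (Δ i)]; ring
  have e4 : 2 * B v v = ∑ i, ∑ j, -(X i * X j * B (Δ i) (Δ j) * (y i - y j)^2) := by
    have : ∑ i, ∑ j, -(X i * X j * B (Δ i) (Δ j) * (y i - y j)^2) =
        2 * (∑ i, ∑ j, (X i * y i) * (X j * y j) * B (Δ i) (Δ j))
        - (∑ i, ∑ j, X i * X j * B (Δ i) (Δ j) * (y i)^2)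
        - ∑ i, ∑ j, X i * X j * B (Δ i) (Δ j) * (y j)^2 := by
      simp only [Finset.mul_sum, ← Finset.sum_sub_distrib]
      refine Finset.sum_congr rfl fun i _ => Finset.sum_congr rfl fun j _ => ?_
      ring
    rw [this, e2, e3, e1]; ring
  have e5 : 0 ≤ ∑ i, ∑ j, -(X i * X j * B (Δ i) (Δ j) * (y i - y j)^2) := by
    refine Finset.sum_nonneg fun i _ => Finset.sum_nonneg fun j _ => ?_
    by_cases h : i = j
    · simp [h]
    · have h1 := H.nonpos h
      have h2 : 0 ≤ X i := by rw [hX]; exact hx.nn i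
      have h3 : 0 ≤ X j := by rw [hX]; exact hx.nn j
      have h4 : 0 ≤ X i * X j * (-B (Δ i) (Δ j)) * (y i - y j)^2 :=
        mul_nonneg (mul_nonneg (mul_nonneg h2 h3) (by linarith)) (sq_nonneg _)
      linarith
  linarith

lemma B_zero (H : Hyp B Δ) {x : V} (hx : Rad B Δ x) {i j : ι} (hi : Δ.repr x i = 0)
    (hj : Δ.repr x j ≠ 0) : B (Δ i) (Δ j) = 0 := by
  have h := hx.rad i
  rw [B_right (Δ := Δ)] at h
  have := (Finset.sum_eq_zero_iff_of_nonpos (fun l _ => ?_)).1 h j (Finset.mem_univ j)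
  · exact (mul_eq_zero.1 this).resolve_left hj
  · by_cases hl : i = l
    · rw [← hl, hi, zero_mul]
    · exact mul_nonpos_of_nonneg_of_nonpos (hx.nn l) (H.nonpos hl)

lemma B_zero_in (H : Hyp B Δ) {x : V} (hx : Rad B Δ x) {i : ι} (hi : Δ.repr x i = 0)
    {v : V} (hv : InI Δ x v) : B (Δ i) v = 0 := by
  rw [B_right (Δ := Δ)]
  refine Finset.sum_eq_zero fun l _ => ?_
  by_cases hl : Δ.repr x l = 0
  · rw [hv l hl, zero_mul]
  · rw [B_zero H hx hi hl, mul_zero]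

lemma B_zero_out (H : Hyp B Δ) {x : V} (hx : Rad B Δ x) {i : ι} (hi : Δ.repr x i ≠ 0)
    {v : V} (hv : OutI Δ x v) : B (Δ i) v = 0 := by
  rw [B_right (Δ := Δ)]
  refine Finset.sum_eq_zero fun l _ => ?_
  by_cases hl : Δ.repr x l = 0
  · rw [H.symm, B_zero H hx hl hi, mul_zero]
  · rw [hv l hl, zero_mul]

lemma sg_repr_ne (H : Hyp B Δ) {i j : ι} (h : i ≠ j) (v : V) :
    Δ.repr (sg H i v) j = Δ.repr v j := by
  classical
  simp [sg_apply, Finsupp.single_apply, h]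

lemma sg_in (H : Hyp B Δ) {x : V} (hx : Rad B Δ x) (i : ι) {v : V} (hv : InI Δ x v) :
    InI Δ x (sg H i v) := by
  intro j hj
  by_cases h : i = j
  · subst h
    rw [sg_apply, B_zero_in H hx hj hv]
    simpa using hv i hj
  · rw [sg_repr_ne H h]; exact hv j hj

lemma sg_out (H : Hyp B Δ) {x : V} (hx : Rad B Δ x) (i : ι) {v : V} (hv : OutI Δ x v) :
    OutI Δ x (sg H i v) := by
  intro j hj
  by_cases h : i = j
  · subst h
    rw [sg_apply, B_zero_out H hx hj hv]
    simpa using hv i hj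
  · rw [sg_repr_ne H h]; exact hv j hj

lemma cox_in (H : Hyp B Δ) {x : V} (hx : Rad B Δ x) {w : V ≃ₗ[ℝ] V} (hw : w ∈ cox B Δ) (v : V) :
    (InI Δ x v → InI Δ x (w v)) ∧ (OutI Δ x v → OutI Δ x (w v)) := by
  revert v
  refine cox_ind H (P := fun w => ∀ v, (InI Δ x v → InI Δ x (w v)) ∧ (OutI Δ x v → OutI Δ x (w v)))
    (fun v => ⟨id, id⟩) ?_ hw
  intro i w _ ih v
  rw [LinearEquiv.mul_apply]
  exact ⟨fun h => (ih _).1 (sg_in H hx i h), fun h => (ih _).2 (sg_out H hx i h)⟩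

lemma simple_in {x : V} {i : ι} (hi : Δ.repr x i ≠ 0) : InI Δ x (Δ i) := by
  classical
  intro j hj
  have : i ≠ j := by rintro rfl; exact hi hj
  simp [Finsupp.single_apply, this]

lemma root_in_out (H : Hyp B Δ) {x : V} (hx : Rad B Δ x) {ρ : V} (h : ρ ∈ Phi B Δ) :
    InI Δ x ρ ∨ OutI Δ x ρ := by
  classical
  obtain ⟨w, hw, i, rfl⟩ := h
  by_cases hi : Δ.repr x i = 0
  · right
    apply (cox_in H hx hw _).2
    intro j hj
    have : i ≠ j := by rintro rfl; exact hj hi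
    simp [Finsupp.single_apply, this]
  · left
    exact (cox_in H hx hw _).1 (simple_in hi)

lemma InI.neg {x v : V} (h : InI Δ x v) : InI Δ x (-v) := by
  intro i hi; simp [h i hi]

lemma B_abs_le (H : Hyp B Δ) {x : V} (hx : Rad B Δ x) {ρ σ : V} (h : ρ ∈ Phi B Δ)
    (h' : σ ∈ Phi B Δ) (hi : InI Δ x ρ) (hi' : InI Δ x σ) : |B ρ σ| ≤ 1 := by
  have h1 := Phi_norm H h
  have h2 := Phi_norm H h'
  have p1 := psd H hx (v := ρ + σ) (fun i hh => by simp [hi i hh, hi' i hh])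
  have p2 := psd H hx (v := ρ - σ) (fun i hh => by simp [hi i hh, hi' i hh])
  simp only [map_add, map_sub, LinearMap.add_apply, LinearMap.sub_apply, h1, h2,
    H.symm σ ρ] at p1 p2
  rw [abs_le]
  constructor <;> linarith

def FinP (B : LinearMap.BilinForm ℝ V) (Δ : Module.Basis ι ℝ V) (x : V) (f : V →ₗ[ℝ] ℝ) : Prop :=
  {ρ | ρ ∈ posPhi B Δ ∧ InI Δ x ρ ∧ f ρ ≤ 0}.Finite

lemma sg_sg (H : Hyp B Δ) (i : ι) (v : V) : sg H i (sg H i v) = v := by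
  rw [← LinearEquiv.mul_apply, sg_sq]; rfl

lemma FinP_sg (H : Hyp B Δ) {x : V} (hx : Rad B Δ x) {f : V →ₗ[ℝ] ℝ} (hf : FinP B Δ x f) (i : ι) :
    FinP B Δ x (f ∘ₗ (sg H i : V →ₗ[ℝ] V)) := by
  refine Set.Finite.subset ((Set.finite_singleton (Δ i)).union (hf.image (sg H i))) ?_
  rintro ρ ⟨h1, h2, h3⟩
  by_cases h : ρ = Δ i
  · left; exact h
  · right
    exact ⟨sg H i ρ, ⟨sg_perm H h1 h, sg_in H hx i h2, h3⟩, sg_sg H i ρ⟩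

lemma dominance (H : Hyp B Δ) {x : V} (hx : Rad B Δ x) : ∀ n : ℕ, ∀ f : V →ₗ[ℝ] ℝ, FinP B Δ x f →
    {ρ | ρ ∈ posPhi B Δ ∧ InI Δ x ρ ∧ f ρ < 0}.ncard = n →
    ∃ w ∈ cox B Δ, FinP B Δ x (f ∘ₗ (w : V →ₗ[ℝ] V)) ∧ ∀ i, Δ.repr x i ≠ 0 → 0 ≤ f (w (Δ i)) := by
  intro n
  induction n using Nat.strong_induction_on with
  | _ n IH =>
  intro f hf hn
  by_cases hdom : ∀ i, Δ.repr x i ≠ 0 → 0 ≤ f (Δ i)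
  · exact ⟨1, one_mem _, hf, hdom⟩
  push Not at hdom
  obtain ⟨i, hi, hfi⟩ := hdom
  have hfin : {ρ | ρ ∈ posPhi B Δ ∧ InI Δ x ρ ∧ f ρ < 0}.Finite :=
    Set.Finite.subset hf fun ρ h => ⟨h.1, h.2.1, h.2.2.le⟩
  have hlt : {ρ | ρ ∈ posPhi B Δ ∧ InI Δ x ρ ∧ (f ∘ₗ (sg H i : V →ₗ[ℝ] V)) ρ < 0}.ncard < n := by
    rw [← hn]
    rw [← Set.ncard_image_of_injective _ (sg H i).injective]
    refine Set.ncard_lt_ncard ?_ hfin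
    rw [Set.ssubset_iff_of_subset]
    · refine ⟨Δ i, ⟨simple_pos H i, simple_in hi, hfi⟩, ?_⟩
      rintro ⟨ρ, ⟨h1, -, -⟩, h3⟩
      have : ρ = - Δ i := by rw [← sg_sg H i ρ, h3, sg_self]
      rw [this] at h1
      exact not_both H (simple_pos H i) h1
    · rintro _ ⟨ρ, ⟨h1, h2, h3⟩, rfl⟩
      refine ⟨sg_perm H h1 ?_, sg_in H hx i h2, h3⟩
      rintro rfl
      simp only [LinearMap.comp_apply, LinearEquiv.coe_coe, sg_self, map_neg] at h3
      linarith
  obtain ⟨w, hw, h1, h2⟩ := IH _ hlt _ (FinP_sg H hx hf i) rfl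
  exact ⟨sg H i * w, mul_mem (sg_mem H i) hw, h1, h2⟩

def PJ (B : LinearMap.BilinForm ℝ V) (Δ : Module.Basis ι ℝ V) (J : Set ι) : Set V :=
  {ρ | ρ ∈ posPhi B Δ ∧ ∀ j, j ∉ J → Δ.repr ρ j = 0}

lemma pair_val (H : Hyp B Δ) {x : V} (hx : Rad B Δ x) {α β : V} (hα : α ∈ Phi B Δ)
    (hβ : β ∈ Phi B Δ) (iα : InI Δ x α) (iβ : InI Δ x β) (hlt : |B α β| < 1) :
    ∃ J : Set ι, (PJ B Δ J).Finite ∧ ∃ γ ∈ PJ B Δ J, ∃ δ ∈ PJ B Δ J,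
      B α β = B γ δ ∨ B α β = - B γ δ := by
  have h1 := Phi_norm H hα
  have h2 := Phi_norm H hβ
  obtain ⟨b, hb⟩ : ∃ b, b = B α β := ⟨_, rfl⟩
  have hb' : B β α = b := by rw [hb, H.symm]
  rw [← hb, abs_lt] at hlt
  have det : 1 - b^2 ≠ 0 := by nlinarith
  obtain ⟨p, hp⟩ : ∃ p, p = (l1 Δ α - b * l1 Δ β) / (1 - b^2) := ⟨_, rfl⟩
  obtain ⟨q, hq⟩ : ∃ q, q = (l1 Δ β - b * l1 Δ α) / (1 - b^2) := ⟨_, rfl⟩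
  let f : V →ₗ[ℝ] ℝ := l1L Δ - p • B α - q • B β
  have hfv : ∀ v, f v = l1 Δ v - p * B α v - q * B β v := by
    intro v; simp [f, l1L_apply]
  have fα : f α = 0 := by
    rw [hfv, h1, hb', hp, hq]; field_simp; ring
  have fβ : f β = 0 := by
    rw [hfv, h2, ← hb, hp, hq]; field_simp; ring
  have hf : FinP B Δ x f := by
    refine Set.Finite.subset (discrete H (|p| + |q|)) ?_
    rintro ρ ⟨g1, g2, g3⟩
    refine ⟨g1, ?_⟩
    rw [hfv] at g3
    have k1 := B_abs_le H hx hα g1.1 iα g2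
    have k2 := B_abs_le H hx hβ g1.1 iβ g2
    have k3 : p * B α ρ ≤ |p| := by
      refine (le_abs_self _).trans ?_
      rw [abs_mul]; exact mul_le_of_le_one_right (abs_nonneg _) k1
    have k4 : q * B β ρ ≤ |q| := by
      refine (le_abs_self _).trans ?_
      rw [abs_mul]; exact mul_le_of_le_one_right (abs_nonneg _) k2
    linarith
  obtain ⟨w, hw, hfw, hdom⟩ := dominance H hx _ f hf rfl
  have hww : ∀ v, w (w⁻¹ v) = v := fun v => by
    rw [← LinearEquiv.mul_apply, mul_inv_cancel]; rfl
  let J : Set ι := {i | Δ.repr x i ≠ 0 ∧ f (w (Δ i)) = 0}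
  have hJ : (PJ B Δ J).Finite := by
    refine Set.Finite.subset hfw ?_
    rintro ρ ⟨g1, g2⟩
    refine ⟨g1, fun i hi => g2 i fun hiJ => hiJ.1 hi, le_of_eq ?_⟩
    show f (w ρ) = 0
    rw [← Δ.sum_repr ρ, map_sum, map_sum]
    refine Finset.sum_eq_zero fun i _ => ?_
    rw [map_smul, map_smul, smul_eq_mul]
    by_cases hiJ : i ∈ J
    · rw [hiJ.2, mul_zero]
    · rw [g2 i hiJ, zero_mul]
  have hmem : ∀ ρ ∈ posPhi B Δ, InI Δ x ρ → f (w ρ) = 0 → ρ ∈ PJ B Δ J := by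
    intro ρ g1 g2 g3
    refine ⟨g1, fun j hj => ?_⟩
    rw [← Δ.sum_repr ρ, map_sum, map_sum] at g3
    have := (Finset.sum_eq_zero_iff_of_nonneg (fun i _ => ?_)).1 g3 j (Finset.mem_univ j)
    · rw [map_smul, map_smul, smul_eq_mul] at this
      rcases mul_eq_zero.1 this with h | h
      · exact h
      · by_cases hxj : Δ.repr x j = 0
        · exact g2 j hxj
        · exact absurd ⟨hxj, h⟩ hj
    · rw [map_smul, map_smul, smul_eq_mul]
      by_cases hxi : Δ.repr x i = 0
      · rw [g2 i hxi, zero_mul]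
      · exact mul_nonneg (g1.2 i) (hdom i hxi)
  have hsgn : ∀ σ ∈ Phi B Δ, InI Δ x σ → f σ = 0 →
      ∃ γ ∈ PJ B Δ J, w⁻¹ σ = γ ∨ w⁻¹ σ = -γ := by
    intro σ g1 g2 g3
    have k1 := Phi_cox (inv_mem hw) g1
    have k2 := (cox_in H hx (inv_mem hw) σ).1 g2
    rcases pos_or_neg H k1 with h | h
    · exact ⟨_, hmem _ h k2 (by rw [hww, g3]), Or.inl rfl⟩
    · exact ⟨_, hmem _ h k2.neg (by rw [map_neg, hww, map_neg, g3, neg_zero]), Or.inr (by simp)⟩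
  obtain ⟨γ, hγ, cγ⟩ := hsgn α hα iα fα
  obtain ⟨δ, hδ, cδ⟩ := hsgn β hβ iβ fβ
  refine ⟨J, hJ, γ, hγ, δ, hδ, ?_⟩
  rw [← cox_B H (inv_mem hw) α β]
  rcases cγ with h | h <;> rcases cδ with h' | h' <;> rw [h, h'] <;> simp

lemma fin_vals (H : Hyp B Δ) {x : V} (hx : Rad B Δ x) : ∃ T : Set ℝ, T.Finite ∧
    ∀ i, ∀ ρ ∈ posPhi B Δ, InI Δ x ρ → B (Δ i) ρ ∈ T := by
  let S : Set ι → Set ℝ := fun J => {r | (PJ B Δ J).Finite ∧ ∃ γ ∈ PJ B Δ J, ∃ δ ∈ PJ B Δ J,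
      r = B γ δ ∨ r = - B γ δ}
  have hS : ∀ J, (S J).Finite := by
    intro J
    by_cases hJ : (PJ B Δ J).Finite
    · refine Set.Finite.subset (((hJ.prod hJ).image (fun p : V × V => B p.1 p.2)).union
        ((hJ.prod hJ).image (fun p : V × V => - B p.1 p.2))) ?_
      rintro r ⟨-, γ, hγ, δ, hδ, h | h⟩
      · left; exact ⟨(γ, δ), ⟨hγ, hδ⟩, h.symm⟩
      · right; exact ⟨(γ, δ), ⟨hγ, hδ⟩, h.symm⟩
    · refine Set.Finite.subset Set.finite_empty ?_
      rintro r ⟨h, -⟩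
      exact hJ h
  refine ⟨(⋃ J, S J) ∪ {0, 1, -1}, (Set.finite_iUnion hS).union (by simp), ?_⟩
  intro i ρ h1 h2
  by_cases hi : Δ.repr x i = 0
  · right; left; exact B_zero_in H hx hi h2
  · have := B_abs_le H hx (Phi_simple i) h1.1 (simple_in hi) h2
    rcases lt_or_eq_of_le this with hlt | he
    · left
      obtain ⟨J, hJ, hh⟩ := pair_val H hx (Phi_simple i) h1.1 (simple_in hi) h2 hlt
      exact Set.mem_iUnion.2 ⟨J, hJ, hh⟩
    · right; right
      rcases (abs_eq (by norm_num)).1 he with h | h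
      · left; exact h
      · right; exact h

lemma l1_add (u v : V) : l1 Δ (u + v) = l1 Δ u + l1 Δ v := by
  simp only [← l1L_apply, map_add]

lemma l1_smul (c : ℝ) (v : V) : l1 Δ (c • v) = c * l1 Δ v := by
  simp only [← l1L_apply, map_smul, smul_eq_mul]

lemma nrm_smul {c : ℝ} (hc : c ≠ 0) (v : V) : nrm Δ (c • v) = nrm Δ v := by
  rw [nrm, nrm, l1_smul, smul_smul]
  congr 1
  field_simp

lemma mem_E2circ (H : Hyp B Δ) {ρ : V} (h : ρ ∈ posPhi B Δ) (h1 : l1 Δ ρ ≠ 1) (i : ι) (t : ℝ)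
    (hB : B (ρ + t • Δ i) (ρ + t • Δ i) = 0) (ht : l1 Δ ρ + t ≠ 0) :
    nrm Δ (ρ + t • Δ i) ∈ E2circ B Δ := by
  have hl := l1_pos H h
  have hs : l1 Δ (ρ + t • Δ i) = l1 Δ ρ + t := by rw [l1_add, l1_smul, l1_simple, mul_one]
  refine ⟨i, ρ, h, ?_, ⟨l1 Δ ρ / (l1 Δ ρ + t), ?_⟩, ?_, ?_⟩
  · intro he
    apply h1
    have : ρ = l1 Δ ρ • Δ i := by rw [← he, nrm, smul_smul, mul_inv_cancel₀ hl.ne', one_smul]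
    rw [eq_of_smul H h (simple_pos H i) this, l1_simple]
  · rw [nrm, nrm, hs]
    generalize l1 Δ ρ = l at *
    have e1 : l / (l + t) * l⁻¹ = (l + t)⁻¹ := by field_simp
    have e2 : 1 - l / (l + t) = (l + t)⁻¹ * t := by field_simp; ring
    rw [smul_sub, smul_smul, e1, smul_add, smul_smul, ← e2]
    module
  · rw [nrm]
    simp only [map_smul, LinearMap.smul_apply, hB, smul_zero]
  · rw [nrm, l1_smul, hs, inv_mul_cancel₀ ht]

lemma exists_t {b : ℝ} (hb : 1 ≤ |b|) : ∃ t : ℝ, |t| ≤ 1 ∧ 1 + 2 * t * b + t ^ 2 = 0 := by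
  have hpos : ∀ b : ℝ, 1 ≤ b → ∃ t : ℝ, |t| ≤ 1 ∧ 1 + 2 * t * b + t ^ 2 = 0 := by
    intro b hb
    have h0 : 0 ≤ b^2 - 1 := by nlinarith
    have h1 := Real.sq_sqrt h0
    have h2 := Real.sqrt_nonneg (b^2-1)
    refine ⟨-b + Real.sqrt (b^2-1), ?_, by nlinarith⟩
    rw [abs_le]
    constructor
    · by_contra h
      push Not at h
      nlinarith
    · by_contra h
      push Not at h
      nlinarith
  rcases le_abs.1 hb with h | h
  · exact hpos b h
  · obtain ⟨t, h1, h2⟩ := hpos _ h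
    exact ⟨-t, by rwa [abs_neg], by nlinarith⟩

lemma nrm_tendsto (H : Hyp B Δ) {x : V} (hx : l1 Δ x = 1) {ρ e : ℕ → V}
    (h1 : Tendsto (fun n => l1 Δ (ρ n)) atTop atTop)
    (h2 : Tendsto (fun n => nrm Δ (ρ n)) atTop (𝓝 x)) {C : ℝ} (he : ∀ n, ‖e n‖ ≤ C) :
    Tendsto (fun n => nrm Δ (ρ n + e n)) atTop (𝓝 x) := by
  have hz0 : Tendsto (fun n => (l1 Δ (ρ n))⁻¹ • e n) atTop (𝓝 0) := by
    rw [tendsto_zero_iff_norm_tendsto_zero]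
    have := (h1.inv_tendsto_atTop.norm).mul_const C
    simp only [norm_zero, zero_mul] at this
    refine squeeze_zero (fun _ => norm_nonneg _) (fun n => ?_) this
    rw [norm_smul]
    exact mul_le_mul_of_nonneg_left (he n) (norm_nonneg _)
  have hz : Tendsto (fun n => nrm Δ (ρ n) + (l1 Δ (ρ n))⁻¹ • e n) atTop (𝓝 x) := by
    simpa using h2.add hz0
  have hl : Tendsto (fun n => l1 Δ (nrm Δ (ρ n) + (l1 Δ (ρ n))⁻¹ • e n)) atTop (𝓝 1) := by
    have := ((cont_lin Δ (l1L Δ)).tendsto x).comp hz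
    rw [l1L_apply, hx] at this
    refine this.congr fun n => ?_
    simp only [Function.comp, l1L_apply]
  have hf := (hl.inv₀ one_ne_zero).smul hz
  rw [inv_one, one_smul] at hf
  refine hf.congr' ?_
  filter_upwards [h1.eventually_gt_atTop 0] with n hn
  have : ρ n + e n = l1 Δ (ρ n) • (nrm Δ (ρ n) + (l1 Δ (ρ n))⁻¹ • e n) := by
    rw [smul_add, nrm, smul_smul, smul_smul, mul_inv_cancel₀ hn.ne', one_smul, one_smul]
  rw [this, nrm_smul hn.ne']
  rfl

lemma exists_seq (H : Hyp B Δ) {x : V} (hx : x ∈ Eset B Δ) : ∃ ρ : ℕ → V,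
    (∀ n, ρ n ∈ posPhi B Δ) ∧ Tendsto (fun n => l1 Δ (ρ n)) atTop atTop ∧
    Tendsto (fun n => nrm Δ (ρ n)) atTop (𝓝 x) := by
  have key : ∀ n : ℕ, ∃ ρ ∈ posPhi B Δ, (n:ℝ) ≤ l1 Δ ρ ∧ dist (nrm Δ ρ) x < 1 / ((n:ℝ) + 1) := by
    intro n
    have hpos : (0:ℝ) < 1 / ((n:ℝ) + 1) := by positivity
    have hinf : (Metric.ball x (1 / ((n:ℝ) + 1)) ∩ nPhi B Δ).Infinite :=
      Set.Infinite.of_accPt (AccPt.nhds_inter hx (Metric.ball_mem_nhds x hpos))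
    obtain ⟨y, ⟨hy1, ρ, hρ, rfl⟩, hy2⟩ :=
      hinf.exists_notMem_finite ((discrete H (n:ℝ)).image (nrm Δ))
    refine ⟨ρ, hρ, ?_, hy1⟩
    by_contra hlt
    push Not at hlt
    exact hy2 ⟨ρ, ⟨hρ, hlt.le⟩, rfl⟩
  choose ρ h1 h2 h3 using key
  refine ⟨ρ, h1, tendsto_atTop_mono h2 tendsto_natCast_atTop_atTop, ?_⟩
  rw [tendsto_iff_dist_tendsto_zero]
  exact squeeze_zero (fun _ => dist_nonneg) (fun n => (h3 n).le) tendsto_one_div_add_atTop_nhds_zero_nat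

lemma cox_rad (H : Hyp B Δ) {d : V} (hd : ∀ i, B (Δ i) d = 0) {w : V ≃ₗ[ℝ] V}
    (hw : w ∈ cox B Δ) : w d = d := by
  refine cox_ind H (P := fun w => w d = d) rfl ?_ hw
  intro i w _ ih
  rw [LinearEquiv.mul_apply, sg_apply, hd i]
  simpa using ih

theorem main_thm (H : Hyp B Δ) : Eset B Δ ⊆ closure (E2circ B Δ) := by
  intro x hxE
  obtain ⟨ρ, hρ, hl, hn⟩ := exists_seq H hxE
  have hcoord : ∀ i, Tendsto (fun n => Δ.coord i (nrm Δ (ρ n))) atTop (𝓝 (Δ.coord i x)) :=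
    fun i => ((cont_lin Δ (Δ.coord i)).tendsto x).comp hn
  have hx1 : l1 Δ x = 1 := by
    have := ((cont_lin Δ (l1L Δ)).tendsto x).comp hn
    refine tendsto_nhds_unique (f := fun n => l1L Δ (nrm Δ (ρ n))) (l := atTop) ?_
      (tendsto_const_nhds.congr fun n => ?_)
    · rw [← l1L_apply]; exact this
    · rw [l1L_apply, nrm, l1_smul, inv_mul_cancel₀ (l1_pos H (hρ n)).ne']
  by_cases hrad : ∀ i, B (Δ i) x = 0
  · -- radical case
    have hxR : Rad B Δ x := by
      refine ⟨fun i => ?_, hrad⟩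
      refine ge_of_tendsto' (hcoord i) fun n => ?_
      rw [nrm, map_smul, smul_eq_mul]
      exact mul_nonneg (inv_nonneg.2 (l1_pos H (hρ n)).le) ((hρ n).2 i)
    obtain ⟨i0, hi0⟩ : ∃ i, Δ.repr x i ≠ 0 := by
      by_contra h
      push Not at h
      simp [l1, h] at hx1
    have hin : ∀ᶠ n in atTop, InI Δ x (ρ n) := by
      filter_upwards [(hcoord i0).eventually_ne (show Δ.coord i0 x ≠ 0 from hi0)] with n h
      refine (root_in_out H hxR (hρ n).1).resolve_right fun ho => h ?_
      rw [nrm, map_smul, Module.Basis.coord_apply, ho i0 hi0, smul_zero]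
    obtain ⟨T, hT, hTv⟩ := fin_vals H hxR
    have hTp : {f : ι → ℝ | ∀ i, f i ∈ T}.Finite := Set.Finite.pi' fun _ => hT
    obtain ⟨val, hval⟩ : ∃ val : ι → ℝ, ∃ᶠ n in atTop, (fun i => B (Δ i) (ρ n)) = val := by
      by_contra hc
      simp only [not_exists, not_frequently] at hc
      have h1 := (eventually_all_finite hTp).2 fun val _ => hc val
      obtain ⟨n, h2, h3⟩ := (h1.and hin).exists
      exact h2 _ (fun i => hTv i _ (hρ n) h3) rfl
    obtain ⟨m, hm⟩ := hval.exists
    have ht := nrm_tendsto H hx1 hl hn (e := fun _ => -ρ m) (C := ‖-ρ m‖) (fun _ => le_rfl)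
    refine mem_closure_of_frequently_of_tendsto ?_ ht
    refine (hval.and_eventually (hl.eventually_gt_atTop (l1 Δ (ρ m)))).mono ?_
    rintro n ⟨hnv, hnl⟩
    have hd : ∀ i, B (Δ i) (ρ n - ρ m) = 0 := by
      intro i
      have := congrFun (hnv.trans hm.symm) i
      rw [map_sub, this, sub_self]
    obtain ⟨w, hw, j, hj⟩ := (hρ m).1
    have hσ : Δ j + (ρ n - ρ m) ∈ Phi B Δ := by
      have h1 : w (Δ j + (ρ n - ρ m)) = ρ n := by
        rw [map_add, hj, cox_rad H hd hw]; abel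
      have h2 : w⁻¹ (ρ n) = Δ j + (ρ n - ρ m) := by
        have h3 : w⁻¹ (w (Δ j + (ρ n - ρ m))) = Δ j + (ρ n - ρ m) := by
          rw [← LinearEquiv.mul_apply, inv_mul_cancel]; rfl
        rwa [h1] at h3
      rw [← h2]
      exact Phi_cox (inv_mem hw) (hρ n).1
    have hls : l1 Δ (Δ j + (ρ n - ρ m)) = 1 + (l1 Δ (ρ n) - l1 Δ (ρ m)) := by
      simp only [← l1L_apply, map_add, map_sub]
      rw [l1L_apply (Δ j), l1_simple]
    have e : ρ n + -ρ m = (Δ j + (ρ n - ρ m)) + (-1 : ℝ) • Δ j := by module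
    rw [e]
    refine mem_E2circ H (pos_of_l1 H hσ (by linarith)) (by linarith) j (-1) ?_ (by
      rw [hls]; intro h; linarith)
    rw [← e, ← sub_eq_add_neg, B_left (Δ := Δ)]
    exact Finset.sum_eq_zero fun i _ => by rw [hd i, mul_zero]
  · push Not at hrad
    obtain ⟨i, hi⟩ := hrad
    have hb : Tendsto (fun n => |B (Δ i) (ρ n)|) atTop atTop := by
      have h1 : Tendsto (fun n => |B (Δ i) (nrm Δ (ρ n))|) atTop (𝓝 |B (Δ i) x|) :=
        (((cont_lin Δ (B (Δ i))).tendsto x).comp hn).abs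
      have h2 := hl.atTop_mul_pos (abs_pos.2 hi) h1
      refine h2.congr fun n => ?_
      have hp := l1_pos H (hρ n)
      rw [nrm, map_smul, smul_eq_mul, abs_mul, abs_inv, abs_of_pos hp, ← mul_assoc,
        mul_inv_cancel₀ hp.ne', one_mul]
    have hex : ∀ n, ∃ t : ℝ, |t| ≤ 1 ∧
        (1 ≤ |B (Δ i) (ρ n)| → 1 + 2 * t * B (Δ i) (ρ n) + t ^ 2 = 0) := by
      intro n
      by_cases h : 1 ≤ |B (Δ i) (ρ n)|
      · obtain ⟨t, h1, h2⟩ := exists_t h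
        exact ⟨t, h1, fun _ => h2⟩
      · exact ⟨0, by simp, fun h' => absurd h' h⟩
    choose t ht1 ht2 using hex
    have ht := nrm_tendsto H hx1 hl hn (e := fun n => t n • Δ i) (C := ‖Δ i‖) (fun n => by
      rw [norm_smul]
      exact mul_le_of_le_one_left (norm_nonneg _) (ht1 n))
    refine mem_closure_of_tendsto ht ?_
    filter_upwards [hb.eventually_ge_atTop 1, hl.eventually_gt_atTop 1] with n h1 h2
    refine mem_E2circ H (hρ n) h2.ne' i (t n) ?_ ?_
    · have := ht2 n h1
      simp only [map_add, map_smul, LinearMap.add_apply, LinearMap.smul_apply, smul_eq_mul,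
        Phi_norm H (hρ n).1, H.diag, H.symm (ρ n) (Δ i)]
      linarith
    · have := (abs_le.1 (ht1 n)).1
      intro h; linarith

/-- If `Φ` is infinite, then `E₂°` is dense in `E(Φ)`. -/
theorem statement16 (B : LinearMap.BilinForm ℝ V) (Δ : Module.Basis ι ℝ V)
    (hsymm : ∀ u v : V, B u v = B v u)
    (hdiag : ∀ i : ι, B (Δ i) (Δ i) = 1)
    (hoff : ∀ i j : ι, i ≠ j → B (Δ i) (Δ j) ≤ -1 ∨
      ∃ k : ℕ, 2 ≤ k ∧ B (Δ i) (Δ j) = -Real.cos (Real.pi / (k : ℝ)))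
    (hinf : (Phi B Δ).Infinite) :
    Eset B Δ ⊆ closure (E2circ B Δ) := by
  exact main_thm ⟨hsymm, hdiag, hoff⟩
end
end

section
/- Suppose Φ is infinite, (Φ,Δ) is irreducible, and B is not positive semidefinite (i.e., (Φ,Δ) is not affine). Then the radical V^⊥ = {v ∈ V : B(v,u) = 0 for all u ∈ V} intersects the cone cone(Δ) of nonnegative linear combinations of Δ only in {0}: V^⊥ ∩ cone(Δ) = {0}. -/
open Filter Topology

noncomputable section

variable {ι V : Type*} [Fintype ι] [NormedAddCommGroup V] [NormedSpace ℝ V]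

/-- If `Φ` is infinite, `(Φ,Δ)` is irreducible and `B` is not positive semidefinite,
then the radical of `B` meets `cone(Δ)` only in `0`. -/
theorem statement18 (B : LinearMap.BilinForm ℝ V) (Δ : Module.Basis ι ℝ V)
    (hsymm : ∀ u v : V, B u v = B v u)
    (hdiag : ∀ i : ι, B (Δ i) (Δ i) = 1)
    (hoff : ∀ i j : ι, i ≠ j → B (Δ i) (Δ j) ≤ -1 ∨
      ∃ k : ℕ, 2 ≤ k ∧ B (Δ i) (Δ j) = -Real.cos (Real.pi / (k : ℝ)))
    (hinf : (Phi B Δ).Infinite)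
    (hirr : ¬ ∃ I : Set ι, I.Nonempty ∧ Iᶜ.Nonempty ∧ ∀ i ∈ I, ∀ j ∈ Iᶜ, B (Δ i) (Δ j) = 0)
    (hnpsd : ¬ ∀ v : V, 0 ≤ B v v) :
    { v : V | (∀ u : V, B v u = 0) ∧ ∀ i : ι, 0 ≤ Δ.repr v i } = {0} := by
  classical
  have hle : ∀ i j : ι, i ≠ j → B (Δ i) (Δ j) ≤ 0 := by
    intro i j hij
    rcases hoff i j hij with h | ⟨k, hk, h⟩
    · linarith
    · rw [h, neg_nonpos]
      have hk' : (2 : ℝ) ≤ k := by exact_mod_cast hk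
      have hpi := Real.pi_pos
      apply Real.cos_nonneg_of_mem_Icc
      constructor
      · have : 0 ≤ Real.pi / (k : ℝ) := by positivity
        linarith
      · exact div_le_div_of_nonneg_left hpi.le (by norm_num) hk'
  ext v
  simp only [Set.mem_ofPred_eq, Set.mem_singleton_iff]
  constructor
  swap
  · rintro rfl
    simp
  rintro ⟨hrad, hpos⟩
  by_contra hv
  have hrow : ∀ j, ∑ i, Δ.repr v i * B (Δ i) (Δ j) = 0 := by
    intro j
    have h := hrad (Δ j)
    rw [← Δ.sum_repr v] at h
    simpa only [map_sum, map_smul, LinearMap.sum_apply, LinearMap.smul_apply, smul_eq_mul] using h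
  have hall : ∀ i, 0 < Δ.repr v i := by
    by_contra hcon
    push Not at hcon
    obtain ⟨j0, hj0⟩ := hcon
    apply hirr
    refine ⟨{i | 0 < Δ.repr v i}, ?_, ⟨j0, by simpa using hj0⟩, ?_⟩
    · by_contra hne
      rw [Set.not_nonempty_iff_eq_empty] at hne
      apply hv
      apply Δ.ext_elem
      intro i
      have : ¬ 0 < Δ.repr v i := fun h => by
        have : i ∈ ({i | 0 < Δ.repr v i} : Set ι) := h
        rw [hne] at this
        exact this
      have := le_antisymm (not_lt.mp this) (hpos i)
      simpa using this
    · intro i hi j hj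
      have hi' : 0 < Δ.repr v i := hi
      have hj' : ¬ 0 < Δ.repr v j := hj
      have hj0 : Δ.repr v j = 0 := le_antisymm (not_lt.mp hj') (hpos j)
      have hterm : ∀ l ∈ Finset.univ, Δ.repr v l * B (Δ l) (Δ j) ≤ 0 := by
        intro l _
        by_cases hlj : l = j
        · subst hlj
          simp [hj0]
        · exact mul_nonpos_of_nonneg_of_nonpos (hpos l) (hle l j hlj)
      have := (Finset.sum_eq_zero_iff_of_nonpos hterm).mp (hrow j) i (Finset.mem_univ i)
      exact (mul_eq_zero.mp this).resolve_left hi'.ne'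
  apply hnpsd
  intro u
  have hu : B u u = ∑ i, ∑ j, Δ.repr u i * Δ.repr u j * B (Δ i) (Δ j) := by
    conv_lhs => rw [← Δ.sum_repr u]
    simp only [map_sum, map_smul, LinearMap.sum_apply, LinearMap.smul_apply, smul_eq_mul]
    simp only [Finset.mul_sum]
    rw [Finset.sum_comm]
    refine Finset.sum_congr rfl fun i _ => Finset.sum_congr rfl fun j _ => ?_
    first | ring1 | (rw [hsymm (Δ j) (Δ i)]; ring1)
  set c : ι → ℝ := fun i => Δ.repr v i with hc
  set y : ι → ℝ := fun i => Δ.repr u i / c i with hy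
  have hx : ∀ i, Δ.repr u i = c i * y i := fun i => by
    exact (mul_div_cancel₀ _ (hall i).ne').symm
  have h1 : ∑ i, ∑ j, (c j * y j ^ 2) * (c i * B (Δ i) (Δ j)) = 0 := by
    rw [Finset.sum_comm]
    apply Finset.sum_eq_zero
    intro j _
    rw [← Finset.mul_sum, hrow j, mul_zero]
  have h2 : ∑ i, ∑ j, (c i * y i ^ 2) * (c j * B (Δ i) (Δ j)) = 0 := by
    apply Finset.sum_eq_zero
    intro i _
    rw [← Finset.mul_sum]
    simp_rw [hsymm (Δ i)]
    rw [hrow i, mul_zero]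
  have h3 : ∑ i, ∑ j, ((c j * y j ^ 2) * (c i * B (Δ i) (Δ j)) +
      (c i * y i ^ 2) * (c j * B (Δ i) (Δ j))) ≤
      ∑ i, ∑ j, 2 * (Δ.repr u i * Δ.repr u j * B (Δ i) (Δ j)) := by
    refine Finset.sum_le_sum fun i _ => Finset.sum_le_sum fun j _ => ?_
    rw [hx i, hx j]
    by_cases hij : i = j
    · subst hij
      apply le_of_eq
      ring
    · have hcc : 0 ≤ c i * c j := (mul_pos (hall i) (hall j)).le
      have := mul_nonneg (mul_nonneg hcc (sq_nonneg (y i - y j))) (neg_nonneg.mpr (hle i j hij))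
      nlinarith [this]
  simp only [Finset.sum_add_distrib, h1, h2] at h3
  simp only [← Finset.mul_sum, ← hu] at h3
  linarith
end
end

section
/- Let (W,S) be a Coxeter system with S finite, and let T = {wsw⁻¹ : w ∈ W, s ∈ S} be its set of reflections. If for all t, t' ∈ T the subgroup of W generated by {t, t'} is finite (equivalently, every product tt' of two reflections has finite order), then W is finite. -/
namespace CoxAux
set_option linter.unusedSimpArgs false
set_option linter.unusedSectionVars false
open Real

variable {B : Type*} [Fintype B] [DecidableEq B] (M : CoxeterMatrix B)

noncomputable def G : Matrix B B ℝ := fun i j => -2 * Real.cos (π / (M i j : ℝ))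

noncomputable def bf : LinearMap.BilinForm ℝ (B → ℝ) := Matrix.toBilin' (G M)

def e (i : B) : B → ℝ := Pi.single i 1

lemma bf_e (i j : B) : bf M (e i) (e j) = -2 * Real.cos (π / (M i j : ℝ)) := by
  simp [bf, e, G]

lemma bf_self (i : B) : bf M (e i) (e i) = 2 := by
  simp [bf_e]

lemma bf_e_apply (i : B) (v : B → ℝ) : bf M (e i) v = ∑ j, G M i j * v j := by
  simp [bf, e, Matrix.toBilin'_apply, Pi.single_apply]

lemma bf_symm (x y : B → ℝ) : bf M x y = bf M y x := by
  simp only [bf, Matrix.toBilin'_apply]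
  rw [Finset.sum_comm]
  refine Finset.sum_congr rfl fun i _ => Finset.sum_congr rfl fun j _ => ?_
  simp only [G, M.symmetric i j]; ring

noncomputable def rf (i : B) : (B → ℝ) ≃ₗ[ℝ] (B → ℝ) := Module.reflection (bf_self M i)

lemma rf_apply (i : B) (v : B → ℝ) : rf M i v = v - bf M (e i) v • e i :=
  Module.reflection_apply _ _

lemma rf_sq (i : B) : rf M i * rf M i = 1 := by
  ext1 v; exact Module.involutive_reflection (bf_self M i) v

lemma rf_bf (i : B) (x y : B → ℝ) : bf M (rf M i x) (rf M i y) = bf M x y := by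
  simp only [rf_apply, map_sub, map_smul, LinearMap.sub_apply, LinearMap.smul_apply, bf_self,
    smul_eq_mul, bf_symm M x (e i)]
  ring

lemma pow_formula (i j : B) (k : ℕ) :
    Real.sin (π / (M i j : ℝ)) • ((rf M i * rf M j) ^ k) (e i) =
      Real.sin ((2 * k + 1) * (π / (M i j : ℝ))) • e i
      + Real.sin ((2 * k) * (π / (M i j : ℝ))) • e j := by
  induction k with
  | zero => simp
  | succ k ih =>
    rw [pow_succ', LinearEquiv.mul_apply, ← map_smul, ih]
    simp only [LinearEquiv.mul_apply, rf_apply, map_add, map_sub, map_smul, bf_self, bf_e,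
      M.symmetric j i, smul_eq_mul]
    set θ := π / (M i j : ℝ)
    have h1 : Real.sin ((2 * (k + 1 : ℕ)) * θ) =
        2 * cos θ * Real.sin ((2 * k + 1) * θ) - Real.sin (2 * k * θ) := by
      have a1 : (2 * ((k + 1 : ℕ) : ℝ)) * θ = (2 * k + 1) * θ + θ := by push_cast; ring
      have a2 : 2 * (k : ℝ) * θ = (2 * k + 1) * θ - θ := by ring
      rw [a1, a2, sin_add, sin_sub]; ring
    have h2 : Real.sin ((2 * (k + 1 : ℕ) + 1) * θ) =
        2 * cos θ * Real.sin ((2 * (k + 1 : ℕ)) * θ) - Real.sin ((2 * k + 1) * θ) := by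
      have a1 : (2 * ((k + 1 : ℕ) : ℝ) + 1) * θ = (2 * (k + 1 : ℕ)) * θ + θ := by ring
      have a2 : (2 * (k : ℝ) + 1) * θ = (2 * (k + 1 : ℕ)) * θ - θ := by push_cast; ring
      rw [a1, a2, sin_add, sin_sub]; ring
    rw [h2, h1]
    module

lemma pow_formula' (i j : B) (k : ℕ) :
    Real.sin (π / (M i j : ℝ)) • (rf M j) (((rf M i * rf M j) ^ k) (e i)) =
      Real.sin ((2 * k + 1) * (π / (M i j : ℝ))) • e i
      + Real.sin ((2 * k + 2) * (π / (M i j : ℝ))) • e j := by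
  rw [← map_smul, pow_formula]
  simp only [LinearEquiv.mul_apply, rf_apply, map_add, map_sub, map_smul, bf_self, bf_e,
      M.symmetric j i, smul_eq_mul]
  set θ := π / (M i j : ℝ)
  have h1 : Real.sin ((2 * k + 2) * θ) =
      2 * cos θ * Real.sin ((2 * k + 1) * θ) - Real.sin (2 * k * θ) := by
    have a1 : (2 * (k : ℝ) + 2) * θ = (2 * k + 1) * θ + θ := by ring
    have a2 : 2 * (k : ℝ) * θ = (2 * k + 1) * θ - θ := by ring
    rw [a1, a2, sin_add, sin_sub]; ring
  rw [h1]
  module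

lemma sin_pos' {i j : B} (hij : i ≠ j) (h0 : M i j ≠ 0) : 0 < Real.sin (π / (M i j : ℝ)) := by
  have h1 := M.off_diagonal i j hij
  have h2 : (2 : ℝ) ≤ M i j := by exact_mod_cast (by omega : 2 ≤ M i j)
  apply sin_pos_of_pos_of_lt_pi
  · positivity
  · rw [div_lt_iff₀ (by linarith)]; nlinarith [pi_pos]

lemma pow_fix {i j : B} (hij : i ≠ j) (h0 : M i j ≠ 0) :
    ((rf M i * rf M j) ^ (M i j)) (e i) = e i := by
  have hs := sin_pos' M hij h0
  have := pow_formula M i j (M i j)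
  have hm : (M i j : ℝ) ≠ 0 := by exact_mod_cast h0
  rw [show (2 * (M i j : ℝ) + 1) * (π / M i j) = π / M i j + 2 * π by field_simp; ring,
    show (2 * (M i j : ℝ)) * (π / M i j) = 2 * π by field_simp, sin_add_two_pi] at this
  simp only [sin_two_pi, zero_smul, add_zero] at this
  exact smul_right_injective _ hs.ne' this

lemma liftable : M.IsLiftable (rf M) := by
  intro i j
  by_cases hij : i = j
  · subst hij; simp [rf_sq]
  by_cases h0 : M i j = 0
  · simp [h0]
  have hs := sin_pos' M hij h0
  have hi := pow_fix M hij h0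
  have hj : ((rf M i * rf M j) ^ (M i j)) (e j) = e j := by
    have h1 := pow_fix M (Ne.symm hij) (by rwa [M.symmetric])
    rw [M.symmetric j i] at h1
    have h2 : (rf M i * rf M j) = (rf M j * rf M i)⁻¹ := by
      rw [eq_inv_iff_mul_eq_one, mul_assoc, ← mul_assoc (rf M j), rf_sq, one_mul, rf_sq]
    rw [h2, inv_pow]
    nth_rewrite 1 [← h1]
    rw [← LinearEquiv.mul_apply, inv_mul_cancel]; rfl
  ext1 z
  set c := cos (π / M i j)
  have hc : 1 - c ^ 2 ≠ 0 := by
    have := sin_sq_add_cos_sq (π / M i j)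
    have : 1 - c^2 = sin (π / M i j)^2 := by linarith
    rw [this]; positivity
  let p := bf M (e i) z
  let q := bf M (e j) z
  let a := (p + c * q) / (2 * (1 - c^2))
  let b := (q + c * p) / (2 * (1 - c^2))
  have hz : z = a • e i + b • e j + (z - a • e i - b • e j) := by abel
  set y := z - a • e i - b • e j with hy
  have y1 : bf M (e i) y = 0 := by
    simp only [hy, map_sub, map_smul, bf_self, bf_e, smul_eq_mul]
    change p - a * 2 - b * (-2 * c) = 0
    simp only [a, b]; field_simp; ring
  have y2 : bf M (e j) y = 0 := by
    simp only [hy, map_sub, map_smul, bf_self, bf_e, smul_eq_mul, M.symmetric j i]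
    change q - a * (-2 * c) - b * 2 = 0
    simp only [a, b]; field_simp; ring
  have y3 : ∀ k : ℕ, ((rf M i * rf M j) ^ k) y = y := by
    intro k
    induction k with
    | zero => simp
    | succ k ih => rw [pow_succ', LinearEquiv.mul_apply, ih, LinearEquiv.mul_apply, rf_apply M j, y2,
        zero_smul, sub_zero, rf_apply, y1, zero_smul, sub_zero]
  rw [hz, map_add, map_add, map_smul, map_smul, hi, hj, y3]; rfl

variable {M} {W : Type*} [Group W] (cs : CoxeterSystem M W)

noncomputable def rho : W →* ((B → ℝ) ≃ₗ[ℝ] (B → ℝ)) := cs.lift ⟨rf M, liftable M⟩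

lemma rho_simple (i : B) : rho cs (cs.simple i) = rf M i := cs.lift_apply_simple _ _

lemma rho_bf (w : W) (x y : B → ℝ) : bf M (rho cs w x) (rho cs w y) = bf M x y := by
  induction w using cs.simple_induction_left with
  | one => simp
  | mul_simple_left w i ih =>
    rw [map_mul, LinearEquiv.mul_apply, LinearEquiv.mul_apply, rho_simple, rf_bf, ih]

/-- positivity -/
lemma tits (hM : ∀ i j, M i j ≠ 0) (n : ℕ) : ∀ (w : W) (s : B), cs.length w = n →
    cs.length w < cs.length (w * cs.simple s) → ∀ j, 0 ≤ rho cs w (e s) j := by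
  induction n using Nat.strong_induction_on with
  | _ n IH =>
  intro w s hn hws j
  by_cases hw1 : w = 1
  · subst hw1
    simp only [map_one, LinearEquiv.coe_one, id_eq, e, Pi.single_apply]
    split_ifs <;> norm_num
  obtain ⟨t, ht⟩ := cs.exists_rightDescent_of_ne_one hw1
  have hst : s ≠ t := by
    rintro rfl
    exact lt_asymm hws ht
  rw [cs.isRightDescent_iff] at ht
  let P : ℕ → Prop := fun k => ∃ v, w = v * cs.wordProd (CoxeterSystem.alternatingWord s t k) ∧
    cs.length w = cs.length v + k
  have P1 : P 1 := ⟨w * cs.simple t, by simp [CoxeterSystem.alternatingWord], by omega⟩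
  have Pbd : ∀ k, P k → k ≤ cs.length w := by rintro k ⟨v, _, h⟩; omega
  classical
  have hex : ∃ k, P k ∧ 1 ≤ k ∧ ¬ P (k + 1) := by
    by_contra! hcon
    have : ∀ k, P (k + 1) := by
      intro k
      induction k with
      | zero => exact P1
      | succ k ih => exact hcon _ ih (by omega)
    have := Pbd _ (this (cs.length w))
    omega
  obtain ⟨k, ⟨v, hv, hlv⟩, hk1, hk2⟩ := hex
  have hkm : k < M s t := by
    by_contra! hcon
    have h1 : w * cs.simple s = v * cs.wordProd (CoxeterSystem.alternatingWord t s (k + 1)) := by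
      rw [CoxeterSystem.alternatingWord_succ, cs.wordProd_concat, hv, mul_assoc]
    have h2 := cs.not_isReduced_alternatingWord t s (m := k + 1) (hM _ _)
      (by rw [M.symmetric]; omega)
    have h3 := cs.length_wordProd_le (CoxeterSystem.alternatingWord t s (k + 1))
    have h4 := cs.length_mul_le v (cs.wordProd (CoxeterSystem.alternatingWord t s (k + 1)))
    rw [CoxeterSystem.IsReduced] at h2
    rw [CoxeterSystem.length_alternatingWord] at h2 h3
    rw [← h1] at h4
    omega
  have hy : cs.length v < cs.length (v * cs.simple (if Even k then t else s)) := by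
    set y := (if Even k then t else s) with hy
    rcases cs.length_mul_simple v y with h | h
    · omega
    · exfalso; apply hk2
      refine ⟨v * cs.simple y, ?_, by omega⟩
      rw [CoxeterSystem.alternatingWord_succ', cs.wordProd_cons, ← hy, hv]
      simp [mul_assoc]
  have hx : cs.length v < cs.length (v * cs.simple (if Even k then s else t)) := by
    obtain ⟨l, rfl⟩ : ∃ l, k = l + 1 := ⟨k - 1, by omega⟩
    have h0 : (if Even (l + 1) then s else t) = if Even l then t else s := by
      by_cases h : Even l <;> simp [h, Nat.even_add_one]
    rw [h0]
    set y := (if Even l then t else s) with hy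
    rcases cs.length_mul_simple v y with h | h
    · omega
    · exfalso
      rw [CoxeterSystem.alternatingWord_succ', cs.wordProd_cons, ← hy, ← mul_assoc] at hv
      have h3 := cs.length_wordProd_le (CoxeterSystem.alternatingWord s t l)
      have h4 := cs.length_mul_le (v * cs.simple y) (cs.wordProd (CoxeterSystem.alternatingWord s t l))
      rw [CoxeterSystem.length_alternatingWord] at h3
      rw [← hv] at h4
      omega
  have hvs : cs.length v < cs.length (v * cs.simple s) := by
    by_cases h : Even k <;> simp [h] at hx hy <;> assumption
  have hvt : cs.length v < cs.length (v * cs.simple t) := by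
    by_cases h : Even k <;> simp [h] at hx hy <;> assumption
  have I1 := IH (cs.length v) (by omega) v s rfl hvs j
  have I2 := IH (cs.length v) (by omega) v t rfl hvt j
  have hs := sin_pos' M hst (hM _ _)
  have hsn : ∀ l : ℕ, l ≤ M s t → 0 ≤ Real.sin (l * (π / M s t)) := by
    intro l hl
    have hm : (0 : ℝ) < M s t := by exact_mod_cast Nat.pos_of_ne_zero (hM s t)
    apply sin_nonneg_of_nonneg_of_le_pi (by positivity)
    have : (l : ℝ) ≤ M s t := by exact_mod_cast hl
    rw [mul_div_assoc', div_le_iff₀ hm]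
    nlinarith [pi_pos]
  have hmain : ∃ a b : ℝ, 0 ≤ a ∧ 0 ≤ b ∧ Real.sin (π / (M s t : ℝ)) •
      rho cs (cs.wordProd (CoxeterSystem.alternatingWord s t k)) (e s) = a • e s + b • e t := by
    rw [cs.prod_alternatingWord_eq_mul_pow, map_mul, map_pow, map_mul, rho_simple, rho_simple,
      LinearEquiv.mul_apply]
    rcases Nat.even_or_odd' k with ⟨l, rfl | rfl⟩
    · refine ⟨Real.sin ((2 * l + 1) * (π / (M s t : ℝ))), Real.sin ((2 * l) * (π / (M s t : ℝ))), ?_, ?_, ?_⟩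
      rotate_left 2
      · simp only [even_two, Even.mul_right, if_true, map_one]
        rw [Nat.mul_div_cancel_left _ (by norm_num)]
        exact pow_formula M s t l
      · exact_mod_cast hsn (2 * l + 1) (by omega)
      · exact_mod_cast hsn (2 * l) (by omega)
    · refine ⟨Real.sin ((2 * l + 1) * (π / (M s t : ℝ))), Real.sin ((2 * l + 2) * (π / (M s t : ℝ))), ?_, ?_, ?_⟩
      rotate_left 2
      · rw [if_neg (by simp), rho_simple, show (2 * l + 1) / 2 = l by omega]
        exact pow_formula' M s t l
      · exact_mod_cast hsn (2 * l + 1) (by omega)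
      · exact_mod_cast hsn (2 * l + 2) (by omega)
  obtain ⟨a, b, ha, hb, hab⟩ := hmain
  have : Real.sin (π / (M s t : ℝ)) * rho cs w (e s) j
      = a * rho cs v (e s) j + b * rho cs v (e t) j := by
    have := congrArg (fun z => rho cs v z j) hab
    simp only [map_smul, map_add, Pi.add_apply, Pi.smul_apply, smul_eq_mul] at this
    rw [← this, hv, map_mul]; rfl
  have h5 : 0 ≤ Real.sin (π / (M s t : ℝ)) * rho cs w (e s) j := by rw [this]; positivity
  exact nonneg_of_mul_nonneg_right h5 hs

lemma rho_inj (hM : ∀ i j, M i j ≠ 0) : Function.Injective (rho cs) := by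
  rw [injective_iff_map_eq_one]
  intro w hw
  by_contra hne
  obtain ⟨s, hs⟩ := cs.exists_rightDescent_of_ne_one hne
  have := tits cs hM _ (w * cs.simple s) s rfl (by rw [cs.simple_mul_simple_cancel_right]; exact hs) s
  rw [map_mul, hw, one_mul, rho_simple, rf_apply, bf_self] at this
  simp [e] at this

/-- the reflection in a root -/
lemma rho_refl (w : W) (i : B) (v : B → ℝ) : rho cs (w * cs.simple i * w⁻¹) v =
    v - bf M (rho cs w (e i)) v • rho cs w (e i) := by
  have h : ∀ x, rho cs w (rho cs w⁻¹ x) = x := by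
    intro x
    rw [← LinearEquiv.mul_apply, ← map_mul, mul_inv_cancel, map_one]; rfl
  rw [map_mul, map_mul, LinearEquiv.mul_apply, LinearEquiv.mul_apply, rho_simple, rf_apply, map_sub,
    map_smul, h]
  congr 2
  rw [← rho_bf cs w, h]

lemma bf_root (w : W) (i : B) : bf M (rho cs w (e i)) (rho cs w (e i)) = 2 := by
  rw [rho_bf, bf_self]

lemma fin_ord (h : ∀ t t' : W, cs.IsReflection t → cs.IsReflection t' →
      ((Subgroup.closure {t, t'} : Subgroup W) : Set W).Finite)
    (w u : W) (i j : B) : ∃ n : ℕ, 0 < n ∧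
    (rho cs (w * cs.simple i * w⁻¹) * rho cs (u * cs.simple j * u⁻¹)) ^ n = 1 := by
  set t := w * cs.simple i * w⁻¹
  set t' := u * cs.simple j * u⁻¹
  have hf := h t t' ⟨w, i, rfl⟩ ⟨u, j, rfl⟩
  have : Finite (Subgroup.closure {t, t'} : Subgroup W) := hf
  have hm : t * t' ∈ Subgroup.closure {t, t'} :=
    mul_mem (Subgroup.subset_closure (by simp)) (Subgroup.subset_closure (by simp))
  have h1 := isOfFinOrder_of_finite (⟨t * t', hm⟩ : (Subgroup.closure {t, t'} : Subgroup W))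
  obtain ⟨n, hn, h2⟩ := isOfFinOrder_iff_pow_eq_one.mp h1
  refine ⟨n, hn, ?_⟩
  have h3 := congrArg Subtype.val h2
  simp only [SubmonoidClass.mk_pow, OneMemClass.coe_one] at h3
  rw [← map_mul, ← map_pow, h3, map_one]

lemma root_eq (h : ∀ t t' : W, cs.IsReflection t → cs.IsReflection t' →
      ((Subgroup.closure {t, t'} : Subgroup W) : Set W).Finite)
    (w u : W) (i j : B) (hb : bf M (rho cs w (e i)) (rho cs u (e j)) = 2) :
    rho cs w (e i) = rho cs u (e j) := by
  obtain ⟨n, hn, h1⟩ := fin_ord cs h w u i j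
  have hb' := hb
  rw [bf_symm] at hb'
  have key : ∀ k : ℕ, ((rho cs (w * cs.simple i * w⁻¹) * rho cs (u * cs.simple j * u⁻¹)) ^ k)
      (rho cs w (e i)) = rho cs w (e i) + (2 * k : ℝ) • (rho cs w (e i) - rho cs u (e j)) := by
    intro k
    induction k with
    | zero => simp
    | succ k ih =>
      rw [pow_succ', LinearEquiv.mul_apply, ih, LinearEquiv.mul_apply, rho_refl, rho_refl]
      simp only [map_add, map_sub, map_smul, smul_eq_mul, bf_root, hb, hb']
      push_cast
      module
  have h2 := key n
  rw [h1] at h2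
  have h3 : (2 * n : ℝ) • (rho cs w (e i) - rho cs u (e j)) = 0 := by
    simpa using h2
  have hn' : (2 * n : ℝ) ≠ 0 := by positivity
  exact sub_eq_zero.mp ((smul_eq_zero.mp h3).resolve_left hn')

lemma M_ne (h : ∀ t t' : W, cs.IsReflection t → cs.IsReflection t' →
      ((Subgroup.closure {t, t'} : Subgroup W) : Set W).Finite)
    (i j : B) : M i j ≠ 0 := by
  intro h0
  have hij : i ≠ j := by rintro rfl; simp at h0
  have h2 : rho cs (cs.simple j) (e j) = - e j := by
    rw [rho_simple, rf_apply, bf_self]; module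
  have h1 := root_eq cs h 1 (cs.simple j) i j (by
    rw [h2]; simp [bf_e, h0])
  rw [h2] at h1
  have := congrFun h1 i
  simp [e, hij] at this

lemma cheb_bound (n : ℕ) (hn : 0 < n) (y : ℂ)
    (hy : (Polynomial.Chebyshev.S ℂ ((n : ℤ) - 1)).eval (y * y - 2) = 0) : ‖y‖ ≤ 2 := by
  obtain ⟨θ, hθ⟩ := Complex.cos_surjective (y / 2)
  have hy2 : y = 2 * Complex.cos θ := by rw [hθ]; ring
  have h1 : y * y - 2 = 2 * Complex.cos (2 * θ) := by
    rw [hy2, Complex.cos_two_mul]; ring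
  have h2 := Polynomial.Chebyshev.S_two_mul_complex_cos (2 * θ) ((n : ℤ) - 1)
  rw [← h1, hy, zero_mul] at h2
  have h3 := h2.symm
  rw [Complex.sin_eq_zero_iff] at h3
  obtain ⟨k, hk⟩ := h3
  have hn0 : (n : ℂ) ≠ 0 := by exact_mod_cast hn.ne'
  have h4 : θ = ((k * π / (2 * n) : ℝ) : ℂ) := by
    push_cast at hk ⊢
    field_simp
    linear_combination hk
  rw [hy2, h4, ← Complex.ofReal_cos]
  rw [norm_mul, Complex.norm_real, Complex.norm_ofNat]
  have := Real.abs_cos_le_one (k * π / (2 * n))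
  rw [Real.norm_eq_abs]; linarith

lemma conj_bound (h : ∀ t t' : W, cs.IsReflection t → cs.IsReflection t' →
      ((Subgroup.closure {t, t'} : Subgroup W) : Set W).Finite)
    (K : Subfield ℝ) (φ : K →+* ℂ) (w u : W) (i j : B) (x : K)
    (hx : (x : ℝ) = bf M (rho cs w (e i)) (rho cs u (e j))) : ‖φ x‖ ≤ 2 := by
  obtain ⟨n, hn, h1⟩ := fin_ord cs h w u i j
  set α := rho cs w (e i)
  set β := rho cs u (e j)
  have ha : bf M α α = 2 := bf_root cs w i
  have hb : bf M β β = 2 := bf_root cs u j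
  have e1 : rho cs (w * cs.simple i * w⁻¹) = Module.reflection ha := by
    ext1 v; rw [rho_refl, Module.reflection_apply]
  have e2 : rho cs (u * cs.simple j * u⁻¹) = Module.reflection hb := by
    ext1 v; rw [rho_refl, Module.reflection_apply]
  have h2 := Module.reflection_mul_reflection_pow_apply_self ha hb n
  rw [← e1, ← e2, h1, bf_symm M β α, ← hx] at h2
  set p := (Polynomial.Chebyshev.S ℝ ((n : ℤ) - 1)).eval ((x : ℝ) * x - 2) with hp
  by_cases hpx : p * x = 0
  · rcases mul_eq_zero.mp hpx with h0 | h0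
    · apply cheb_bound n hn
      have h3 : (Polynomial.Chebyshev.S K ((n : ℤ) - 1)).eval (x * x - 2) = 0 := by
        apply K.subtype.injective
        rw [map_zero, ← h0, hp, ← Polynomial.eval₂_hom, Polynomial.eval₂_eq_eval_map, Polynomial.Chebyshev.map_S,
          map_sub, map_mul, map_ofNat K.subtype 2]
        rfl
      have h4 := congrArg φ h3
      rw [map_zero, ← Polynomial.eval₂_hom, Polynomial.eval₂_eq_eval_map, Polynomial.Chebyshev.map_S] at h4
      rw [map_sub, map_mul, map_ofNat φ 2] at h4
      exact h4
    · have : x = 0 := by exact_mod_cast h0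
      simp [this]
  · -- dependent
    have h5 : ∃ c : ℝ, β = c • α := by
      set a := (Polynomial.Chebyshev.S ℝ (n : ℤ)).eval ((x : ℝ) * x - 2) + p with ha'
      refine ⟨(1 - a) / (-(p * x)), ?_⟩
      have h6 : (-(p * x)) • β = (1 - a) • α := by
        have h7 : α = a • α + (p * -(x : ℝ)) • β := h2
        rw [sub_smul, one_smul, eq_sub_iff_add_eq, add_comm]
        rw [mul_neg] at h7; exact h7.symm
      rw [div_eq_inv_mul, mul_smul, ← h6, smul_smul, inv_mul_cancel₀ (neg_ne_zero.mpr hpx), one_smul]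
    obtain ⟨c, hc⟩ := h5
    have hxc : (x : ℝ) = 2 * c := by
      rw [hx, hc, map_smul, ha, smul_eq_mul]; ring
    have hc2 : c ^ 2 = 1 := by
      rw [hc] at hb
      simp only [map_smul, LinearMap.smul_apply, ha, smul_eq_mul] at hb
      linarith
    have h8 : x * x = 4 := by
      apply K.subtype.injective
      rw [map_mul, map_ofNat K.subtype 4, Subfield.subtype_apply, hxc]
      linarith
    have h9 := congrArg (fun z => ‖φ z‖) h8
    simp only [map_mul, norm_mul, map_ofNat, Complex.norm_ofNat] at h9
    nlinarith [norm_nonneg (φ x)]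

lemma G_int (i j : B) : IsIntegral ℤ (G M i j) := by
  have := (Real.isIntegral_two_mul_cos_rat_mul_pi (1 / (M i j : ℚ))).neg
  convert this using 1
  simp only [G]
  push_cast
  rw [show (1 / (M i j : ℝ)) * π = π / M i j by ring]
  ring

lemma exists_field : ∃ (K : Subfield ℝ), NumberField K ∧ ∀ i j, G M i j ∈ K := by
  let S : Set ℝ := Set.range (fun p : B × B => G M p.1 p.2)
  have hint : ∀ x ∈ S, IsIntegral ℚ x := by
    rintro _ ⟨p, rfl⟩
    exact (G_int (M := M) p.1 p.2).tower_top
  have : Finite S := Set.finite_range _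
  have hfd := IntermediateField.finiteDimensional_adjoin (K := ℚ) hint
  refine ⟨(IntermediateField.adjoin ℚ S).toSubfield, ?_, ?_⟩
  · exact @NumberField.mk (IntermediateField.adjoin ℚ S) _ inferInstance hfd
  · intro i j
    exact IntermediateField.subset_adjoin ℚ S ⟨(i, j), rfl⟩

lemma coord_mem (O : Subring ℝ) (hO : ∀ i j, G M i j ∈ O) (w : W) (i j : B) :
    rho cs w (e i) j ∈ O := by
  induction w using cs.simple_induction_left generalizing j with
  | one =>
    simp only [map_one, LinearEquiv.coe_one, id_eq, e, Pi.single_apply]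
    split_ifs
    · exact one_mem _
    · exact zero_mem _
  | mul_simple_left w k ih =>
    rw [map_mul, LinearEquiv.mul_apply, rho_simple, rf_apply, bf_e_apply]
    refine sub_mem (ih j) (mul_mem (sum_mem fun l _ => mul_mem (hO _ _) (ih l)) ?_)
    simp only [e, Pi.single_apply]
    split_ifs
    · exact one_mem _
    · exact zero_mem _

lemma main (h : ∀ t t' : W, cs.IsReflection t → cs.IsReflection t' →
      ((Subgroup.closure {t, t'} : Subgroup W) : Set W).Finite)
    : Finite W := by
  have hM := M_ne cs h
  obtain ⟨K, hK, hGK⟩ := exists_field (M := M)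
  have hF := NumberField.Embeddings.finite_of_norm_le K ℂ 2
  set F : Set ℝ := (fun x : K => (x : ℝ)) '' {x : K | IsIntegral ℤ x ∧ ∀ φ : K →+* ℂ, ‖φ x‖ ≤ 2}
  have hF' : F.Finite := hF.image _
  have : Finite F := hF'
  have hmem : ∀ (w : W) (i k : B), bf M (e k) (rho cs w (e i)) ∈ F := by
    intro w i k
    have m1 : bf M (e k) (rho cs w (e i)) ∈ K := by
      rw [bf_e_apply]
      exact sum_mem fun l _ => mul_mem (hGK _ _) (coord_mem cs K.toSubring hGK w i l)
    have m2 : bf M (e k) (rho cs w (e i)) ∈ (integralClosure ℤ ℝ).toSubring := by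
      rw [bf_e_apply]
      exact sum_mem fun l _ => mul_mem (G_int _ _)
        (coord_mem cs (integralClosure ℤ ℝ).toSubring (fun i j => G_int i j) w i l)
    refine ⟨⟨_, m1⟩, ⟨?_, fun φ => ?_⟩, rfl⟩
    · have m3 : IsIntegral ℤ (bf M (e k) (rho cs w (e i))) := m2
      exact (isIntegral_algHom_iff (K.subtype.toIntAlgHom) K.subtype.injective).mp m3
    · exact conj_bound cs h K φ 1 w k i _ (by simp)
  let Φ : Set (B → ℝ) := Set.range (fun p : W × B => rho cs p.1 (e p.2))
  have hΦ : Finite Φ := by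
    let g : Φ → (B → F) := fun α k => ⟨bf M (e k) α.1, by
      obtain ⟨p, hp⟩ := α.2
      rw [← hp]; exact hmem _ _ _⟩
    apply Finite.of_injective g
    rintro ⟨_, ⟨w, i⟩, rfl⟩ ⟨_, ⟨u, j⟩, rfl⟩ hg
    apply Subtype.ext
    apply root_eq cs h
    have h1 : ∀ k, bf M (e k) (rho cs w (e i)) = bf M (e k) (rho cs u (e j)) := fun k =>
      congrArg Subtype.val (congrFun hg k)
    have h2 : bf M (rho cs w (e i)) = bf M (rho cs u (e j)) := by
      apply (Pi.basisFun ℝ B).ext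
      intro k
      simp only [Pi.basisFun_apply]
      rw [bf_symm, bf_symm M _ (Pi.single k 1)]
      exact h1 k
    rw [h2, bf_root]
  let g : W → (B → Φ) := fun w i => ⟨rho cs w (e i), ⟨(w, i), rfl⟩⟩
  apply Finite.of_injective g
  intro w u hg
  apply rho_inj cs hM
  apply LinearEquiv.toLinearMap_injective
  apply (Pi.basisFun ℝ B).ext
  intro k
  simp only [Pi.basisFun_apply]
  exact congrArg Subtype.val (congrFun hg k)

end CoxAux

/-- Let `(W,S)` be a Coxeter system with `S` finite.  If every subgroup of `W`
generated by two reflections is finite, then `W` is finite. -/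
theorem statement19 {B W : Type*} [Finite B] [Group W]
    {M : CoxeterMatrix B} (cs : CoxeterSystem M W)
    (h : ∀ t t' : W, cs.IsReflection t → cs.IsReflection t' →
      ((Subgroup.closure {t, t'} : Subgroup W) : Set W).Finite) :
    Finite W := by
  classical
  have := Fintype.ofFinite B
  exact CoxAux.main cs h
end
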